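/- Let X ∈ ℝ^{d×n} be deterministic and (ε,B)-orthonormal with ε < 1/λ_σ, let W ∈ ℝ^{ď×d} have i.i.d. N(0,1) entries, and set X̌ = σ(WX)/√ď, where σ is twice differentiable with |σ'|,|σ''| ≤ λ_σ, E[σ(ξ)]=0, and E[σ(ξ)²]=1 for ξ ~ N(0,1). Then there exist universal constants C, c > 0 such that, with probability at least 1 − 2n²e^{−c ď ε²} − 3e^{−cn}, the matrix X̌ is (ε̌, B̌)-orthonormal, where ε̌ = Cλ_σ²ε and B̌ = C(1 + n/ď)λ_σ²B. -/

import Mathlib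

/-!
Lemma (propagation of `(ε,B)`-orthonormality through one layer): if `X` is
`(ε,B)`-orthonormal with `ε < 1/λ_σ` and `W` is an i.i.d. standard Gaussian matrix, then
with probability at least `1 − 2n²e^{−cďε²} − 3e^{−cn}` the matrix `X̌ = σ(WX)/√ď` is
`(Cλ_σ²ε, C(1 + n/ď)λ_σ²B)`-orthonormal.
-/

open MeasureTheory ProbabilityTheory Filter Topology Matrix

noncomputable abbrev stdGaussian : Measure ℝ := gaussianReal 0 1

noncomputable abbrev gaussianVec (d : ℕ) : Measure (Fin d → ℝ) :=
  Measure.pi fun _ => stdGaussian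

noncomputable abbrev gaussianMat (a b : ℕ) : Measure (Fin a → Fin b → ℝ) :=
  Measure.pi fun _ => gaussianVec b

/-- ℓ₂→ℓ₂ operator norm of a real matrix. -/
noncomputable def opNorm {m n : ℕ} (X : Matrix (Fin m) (Fin n) ℝ) : ℝ :=
  ‖LinearMap.toContinuousLinearMap (Matrix.toEuclideanLin X)‖

/-- `(ε,B)`-orthonormality of the columns of a matrix. -/
def IsOrthonormal {d n : ℕ} (ε B : ℝ) (X : Matrix (Fin d) (Fin n) ℝ) : Prop :=
  (∀ α : Fin n, |(∑ i, X i α ^ 2) - 1| ≤ ε) ∧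
  (∀ α β : Fin n, α ≠ β → |∑ i, X i α * X i β| ≤ ε) ∧
  opNorm X ≤ B ∧
  ∑ α : Fin n, ((∑ i, X i α ^ 2) - 1) ^ 2 ≤ B ^ 2


lemma iIndepFun_gaussianVec (d : ℕ) :
    iIndepFun (fun (j : Fin d) (w : Fin d → ℝ) => w j) (gaussianVec d) := by
  have := iIndepFun_pi (μ := fun _ : Fin d => gaussianReal 0 1) (X := fun _ x => x)
    (fun _ => aemeasurable_id)
  exact this

lemma map_eval_gaussianVec (d : ℕ) (j : Fin d) :
    (gaussianVec d).map (fun w => w j) = gaussianReal 0 1 :=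
  (measurePreserving_eval (μ := fun _ : Fin d => gaussianReal 0 1) j).map_eq

instance isGaussian_gaussianVec (d : ℕ) : IsGaussian (gaussianVec d) := by
  have h : HasGaussianLaw (fun (w : Fin d → ℝ) (j : Fin d) => w j) (gaussianVec d) := by
    apply iIndepFun.hasGaussianLaw _ (iIndepFun_gaussianVec d)
    intro j
    constructor
    rw [map_eval_gaussianVec]
    infer_instance
  have := h.isGaussian_map
  simpa using this

lemma memLp_eval_gaussianVec {d : ℕ} (j : Fin d) :
    MemLp (fun w : Fin d → ℝ => w j) 2 (gaussianVec d) := by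
  have : HasGaussianLaw (fun w : Fin d → ℝ => w j) (gaussianVec d) := by
    constructor
    rw [map_eval_gaussianVec]
    infer_instance
  exact this.memLp_two

lemma integral_eval_gaussianVec {d : ℕ} (j : Fin d) :
    ∫ w, w j ∂(gaussianVec d) = 0 := by
  have h := integral_map (μ := gaussianVec d) (φ := fun w => w j) (f := fun x : ℝ => x)
    (measurable_pi_apply j).aemeasurable (by fun_prop)
  rw [← h, map_eval_gaussianVec]
  simp

lemma cov_eval_gaussianVec {d : ℕ} (j k : Fin d) :
    cov[fun w => w j, fun w => w k; gaussianVec d] = if j = k then 1 else 0 := by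
  split_ifs with h
  · subst h
    rw [covariance_self (measurable_pi_apply j).aemeasurable]
    have := variance_id_map (μ := gaussianVec d) (X := fun w => w j)
      (measurable_pi_apply j).aemeasurable
    rw [← this, map_eval_gaussianVec]
    simp
  · exact ((iIndepFun_gaussianVec d).indepFun h).covariance_eq_zero
      (memLp_eval_gaussianVec j) (memLp_eval_gaussianVec k)

lemma cov_dot {d : ℕ} (x y : Fin d → ℝ) :
    cov[fun w => w ⬝ᵥ x, fun w => w ⬝ᵥ y; gaussianVec d] = x ⬝ᵥ y := by
  simp only [dotProduct]
  rw [covariance_fun_sum_fun_sum]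
  · simp only [covariance_mul_const_left, covariance_mul_const_right, cov_eval_gaussianVec]
    simp
  · intro j; exact (memLp_eval_gaussianVec j).mul_const _
  · intro j; exact (memLp_eval_gaussianVec j).mul_const _

noncomputable def dotL {d : ℕ} (x : Fin d → ℝ) : (Fin d → ℝ) →L[ℝ] ℝ :=
  LinearMap.toContinuousLinearMap
    { toFun := fun w => w ⬝ᵥ x
      map_add' := fun a b => add_dotProduct a b x
      map_smul' := fun a b => smul_dotProduct a b x }

lemma dotL_apply {d : ℕ} (x w : Fin d → ℝ) : dotL x w = w ⬝ᵥ x := rfl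

lemma hasGaussianLaw_dot {d : ℕ} (x : Fin d → ℝ) :
    HasGaussianLaw (fun w => w ⬝ᵥ x) (gaussianVec d) := by
  have : HasGaussianLaw (fun w => dotL x (id w)) (gaussianVec d) :=
    (IsGaussian.hasGaussianLaw_id).map_fun (dotL x)
  exact this

lemma hasGaussianLaw_dot_pair {d : ℕ} (x y : Fin d → ℝ) :
    HasGaussianLaw (fun w => (w ⬝ᵥ x, w ⬝ᵥ y)) (gaussianVec d) := by
  have : HasGaussianLaw (fun w => (dotL x).prod (dotL y) (id w)) (gaussianVec d) :=
    (IsGaussian.hasGaussianLaw_id).map_fun _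
  exact this

lemma integral_dot {d : ℕ} (x : Fin d → ℝ) : ∫ w, w ⬝ᵥ x ∂(gaussianVec d) = 0 := by
  simp only [dotProduct]
  rw [integral_finsetSum]
  · simp [integral_mul_const, integral_eval_gaussianVec]
  · intro j _
    exact ((memLp_eval_gaussianVec j).integrable one_le_two).mul_const _

lemma measurable_dot {d : ℕ} (x : Fin d → ℝ) : Measurable (fun w : Fin d → ℝ => w ⬝ᵥ x) := by
  unfold dotProduct; fun_prop

lemma continuous_dot {d : ℕ} (x : Fin d → ℝ) : Continuous (fun w : Fin d → ℝ => w ⬝ᵥ x) := by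
  unfold dotProduct; fun_prop

lemma map_dot {d : ℕ} (x : Fin d → ℝ) :
    (gaussianVec d).map (fun w => w ⬝ᵥ x) = gaussianReal 0 (x ⬝ᵥ x).toNNReal := by
  rw [(hasGaussianLaw_dot x).map_eq_gaussianReal, integral_dot,
    ← covariance_self (measurable_dot x).aemeasurable, cov_dot]

lemma map_dot' {d : ℕ} (x : Fin d → ℝ) :
    (gaussianVec d).map (fun w => w ⬝ᵥ x)
      = (gaussianReal 0 1).map (fun z => √(x ⬝ᵥ x) * z) := by
  rw [map_dot, gaussianReal_map_const_mul]
  have h0 : 0 ≤ x ⬝ᵥ x := by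
    simp only [dotProduct]; exact Finset.sum_nonneg fun i _ => mul_self_nonneg _
  congr 1
  · simp
  · ext; simp [h0]

lemma indep_dot {d : ℕ} (x y : Fin d → ℝ) (h : x ⬝ᵥ y = 0) :
    IndepFun (fun w => w ⬝ᵥ x) (fun w => w ⬝ᵥ y) (gaussianVec d) :=
  (hasGaussianLaw_dot_pair x y).indepFun_of_covariance_eq_zero (by rw [cov_dot, h])

lemma lintegral_exp_dot {d : ℕ} (x : Fin d → ℝ) :
    ∫⁻ w, ENNReal.ofReal (Real.exp (w ⬝ᵥ x)) ∂(gaussianVec d)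
      = ENNReal.ofReal (Real.exp (x ⬝ᵥ x / 2)) := by
  have h0 : 0 ≤ x ⬝ᵥ x := by
    simp only [dotProduct]; exact Finset.sum_nonneg fun i _ => mul_self_nonneg _
  have h1 := mgf_gaussianReal (map_dot x) 1
  simp only [mgf, one_mul] at h1
  have hI : Integrable (fun w => Real.exp (w ⬝ᵥ x)) (gaussianVec d) := by
    by_contra hc
    rw [integral_undef hc] at h1
    exact (Real.exp_pos _).ne h1
  rw [← ofReal_integral_eq_lintegral_ofReal hI (ae_of_all _ fun _ => (Real.exp_pos _).le), h1]
  simp [h0]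

lemma rotation_gaussianVec (d : ℕ) (θ : ℝ) :
    MeasurePreserving (fun p : (Fin d → ℝ) × (Fin d → ℝ) =>
      (Real.cos θ • p.1 + Real.sin θ • p.2, -Real.sin θ • p.1 + Real.cos θ • p.2))
      ((gaussianVec d).prod (gaussianVec d)) ((gaussianVec d).prod (gaussianVec d)) := by
  refine ⟨by fun_prop, ?_⟩
  have h := IsGaussian.map_rotation_eq_self (μ := gaussianVec d) ?_ θ
  · convert h using 2
    funext p
    rw [ContinuousLinearMap.rotation_apply]
  · ext j
    have : Integrable (fun w : Fin d → ℝ => w) (gaussianVec d) := IsGaussian.integrable_id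
    have h2 := (ContinuousLinearMap.proj (R := ℝ) (φ := fun _ : Fin d => ℝ) j).integral_comp_comm this
    simp only [ContinuousLinearMap.proj_apply] at h2
    simp only [id]
    rw [← h2, integral_eval_gaussianVec]; rfl

lemma lintegral_exp_sq :
    ∫⁻ z, ENNReal.ofReal (Real.exp (z ^ 2 / 4)) ∂(gaussianReal 0 1) ≤ ENNReal.ofReal 2 := by
  rw [gaussianReal_of_var_ne_zero _ one_ne_zero, lintegral_withDensity_eq_lintegral_mul _
    (measurable_gaussianPDF _ _) (by fun_prop)]
  have : ∀ z : ℝ, (gaussianPDF 0 1 * fun z => ENNReal.ofReal (Real.exp (z ^ 2 / 4))) z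
      = ENNReal.ofReal ((√(2 * Real.pi))⁻¹ * Real.exp (-(1/4) * z ^ 2)) := by
    intro z
    simp only [Pi.mul_apply, gaussianPDF, gaussianPDFReal]
    rw [← ENNReal.ofReal_mul (by positivity)]
    congr 1
    rw [mul_assoc, ← Real.exp_add]
    simp; left; ring
  simp_rw [this]
  rw [← ofReal_integral_eq_lintegral_ofReal]
  · apply ENNReal.ofReal_le_ofReal
    rw [integral_const_mul, integral_gaussian]
    rw [← Real.sqrt_inv, ← Real.sqrt_mul (by positivity)]
    rw [Real.sqrt_le_left (by norm_num)]
    have := Real.pi_pos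
    field_simp
    norm_num
  · exact (integrable_exp_neg_mul_sq (by norm_num)).const_mul _
  · exact ae_of_all _ fun _ => by positivity

/-- Chernoff bound over the rows. -/
lemma chernoff_rows {d dc : ℕ} (φ : (Fin d → ℝ) → ℝ) (hφ : Measurable φ) (M u : ℝ)
    (hM : ∫⁻ w, ENNReal.ofReal (Real.exp (φ w)) ∂(gaussianVec d) ≤ ENNReal.ofReal (Real.exp M)) :
    gaussianMat dc d {W | u ≤ ∑ i, φ (W i)} ≤ ENNReal.ofReal (Real.exp (dc * M - u)) := by
  have hind : iIndepFun (fun (i : Fin dc) (W : Fin dc → Fin d → ℝ) =>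
      ENNReal.ofReal (Real.exp (φ (W i)))) (gaussianMat dc d) :=
    iIndepFun_pi (μ := fun _ : Fin dc => gaussianVec d)
      (X := fun _ x => ENNReal.ofReal (Real.exp (φ x))) (fun _ => by fun_prop)
  have h1 := lintegral_prod_eq_prod_lintegral_of_indepFun Finset.univ _ hind
    (fun i => by fun_prop)
  have h2 : ∀ i : Fin dc, ∫⁻ W, ENNReal.ofReal (Real.exp (φ (W i))) ∂(gaussianMat dc d)
      ≤ ENNReal.ofReal (Real.exp M) := by
    intro i
    have h := (measurePreserving_eval (μ := fun _ : Fin dc => gaussianVec d) i).lintegral_comp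
      (f := fun w => ENNReal.ofReal (Real.exp (φ w))) (by fun_prop)
    exact h.trans_le hM
  have h3 : ∫⁻ W, ENNReal.ofReal (Real.exp (∑ i, φ (W i))) ∂(gaussianMat dc d)
      ≤ ENNReal.ofReal (Real.exp (dc * M)) := by
    have : ∀ W : Fin dc → Fin d → ℝ, ENNReal.ofReal (Real.exp (∑ i, φ (W i)))
        = ∏ i, ENNReal.ofReal (Real.exp (φ (W i))) := by
      intro W
      rw [Real.exp_sum, ENNReal.ofReal_prod_of_nonneg (fun _ _ => (Real.exp_pos _).le)]
    simp_rw [this]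
    rw [h1]
    calc _ ≤ ∏ i : Fin dc, ENNReal.ofReal (Real.exp M) := Finset.prod_le_prod' fun i _ => h2 i
      _ = _ := by
        rw [← ENNReal.ofReal_prod_of_nonneg (fun _ _ => (Real.exp_pos _).le), ← Real.exp_sum]
        simp
  have h4 := mul_meas_ge_le_lintegral (μ := gaussianMat dc d)
    (f := fun W => ENNReal.ofReal (Real.exp (∑ i, φ (W i)))) (by fun_prop)
    (ENNReal.ofReal (Real.exp u))
  have h5 : {W : Fin dc → Fin d → ℝ | u ≤ ∑ i, φ (W i)}
      ⊆ {W | ENNReal.ofReal (Real.exp u) ≤ ENNReal.ofReal (Real.exp (∑ i, φ (W i)))} := by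
    intro W hW
    exact ENNReal.ofReal_le_ofReal (Real.exp_le_exp.2 hW)
  have h6 := (mul_le_mul_right (measure_mono (μ := gaussianMat dc d) h5)
    (ENNReal.ofReal (Real.exp u))).trans (h4.trans h3)
  rw [Real.exp_sub, ENNReal.ofReal_div_of_pos (Real.exp_pos _)]
  rw [ENNReal.le_div_iff_mul_le (by simp [Real.exp_pos]) (by simp), mul_comm]
  exact h6

lemma ofReal_integral_le_lintegral' {Ω : Type*} [MeasurableSpace Ω] {μ : Measure Ω} {f : Ω → ℝ}
    (hf : Integrable f μ) : ENNReal.ofReal (∫ x, f x ∂μ) ≤ ∫⁻ x, ENNReal.ofReal (f x) ∂μ := by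
  have h1 : ∫ x, f x ∂μ ≤ ∫ x, max (f x) 0 ∂μ :=
    integral_mono hf (hf.pos_part) (fun x => le_max_left _ _)
  refine (ENNReal.ofReal_le_ofReal h1).trans ?_
  rw [ofReal_integral_eq_lintegral_ofReal hf.pos_part (ae_of_all _ fun x => le_max_right _ _)]
  refine lintegral_mono fun x => ?_
  simp

lemma jensen_exp {Ω : Type*} [MeasurableSpace Ω] {μ : Measure Ω} [IsProbabilityMeasure μ]
    {f : Ω → ℝ} (hf : Integrable f μ) :
    ENNReal.ofReal (Real.exp (∫ x, f x ∂μ)) ≤ ∫⁻ x, ENNReal.ofReal (Real.exp (f x)) ∂μ := by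
  set a := ∫ x, f x ∂μ with ha
  have h1 : Integrable (fun x => Real.exp a * (f x - a + 1)) μ :=
    ((hf.sub (integrable_const a)).add (integrable_const 1)).const_mul _
  have h2 : ∫ x, Real.exp a * (f x - a + 1) ∂μ = Real.exp a := by
    have h3 : Integrable (fun x => f x - a) μ := hf.sub (integrable_const a)
    rw [integral_const_mul, integral_add h3 (integrable_const 1),
      integral_sub hf (integrable_const a)]
    simp [ha]
  calc ENNReal.ofReal (Real.exp a) = ENNReal.ofReal (∫ x, Real.exp a * (f x - a + 1) ∂μ) := by
        rw [h2]
    _ ≤ _ := ofReal_integral_le_lintegral' h1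
    _ ≤ _ := by
      refine lintegral_mono fun x => ENNReal.ofReal_le_ofReal ?_
      have := Real.add_one_le_exp (f x - a)
      calc _ ≤ Real.exp a * Real.exp (f x - a) :=
            mul_le_mul_of_nonneg_left this (Real.exp_pos _).le
        _ = _ := by rw [← Real.exp_add]; congr 1; ring

lemma exp_ftc (G q : ℝ → ℝ) (hq : Continuous q) (hG : ∀ s, HasDerivAt G (q s) s) :
    ENNReal.ofReal (Real.exp (G 1 - G 0))
      ≤ ∫⁻ s, ENNReal.ofReal (Real.exp (q s)) ∂(volume.restrict (Set.Ioc (0:ℝ) 1)) := by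
  have : IsProbabilityMeasure (volume.restrict (Set.Ioc (0:ℝ) 1)) := ⟨by simp⟩
  have hint : ∫ s in (0:ℝ)..1, q s = G 1 - G 0 :=
    intervalIntegral.integral_eq_sub_of_hasDerivAt (fun s _ => hG s) (hq.intervalIntegrable _ _)
  have hI : Integrable q (volume.restrict (Set.Ioc (0:ℝ) 1)) :=
    (hq.integrableOn_Icc (a := 0) (b := 1)).mono_set Set.Ioc_subset_Icc_self
  rw [← hint, intervalIntegral.integral_of_le zero_le_one]
  exact jensen_exp hI

noncomputable def rotV {d : ℕ} (θ : ℝ) (p : (Fin d → ℝ) × (Fin d → ℝ)) :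
    (Fin d → ℝ) × (Fin d → ℝ) :=
  (Real.cos θ • p.1 + Real.sin θ • p.2, -Real.sin θ • p.1 + Real.cos θ • p.2)

lemma continuous_rotV {d : ℕ} : Continuous (fun sp : ℝ × ((Fin d → ℝ) × (Fin d → ℝ)) =>
      rotV (Real.pi / 2 * sp.1) sp.2) := by
  unfold rotV; fun_prop

lemma continuous_rotV_left {d : ℕ} (p : (Fin d → ℝ) × (Fin d → ℝ)) : Continuous (fun s : ℝ =>
      rotV (Real.pi / 2 * s) p) := by
  unfold rotV; fun_prop

lemma pisier_aux {d : ℕ} (g : (Fin d → ℝ) → ℝ) (D : (Fin d → ℝ) × (Fin d → ℝ) → ℝ)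
    (hD : Continuous D)
    (hder : ∀ (w z : Fin d → ℝ) (θ : ℝ),
      HasDerivAt (fun θ : ℝ => g (Real.cos θ • w + Real.sin θ • z))
        (D (Real.cos θ • w + Real.sin θ • z, -Real.sin θ • w + Real.cos θ • z)) θ) :
    ∫⁻ p, ENNReal.ofReal (Real.exp (g p.2 - g p.1)) ∂((gaussianVec d).prod (gaussianVec d))
      ≤ ∫⁻ p, ENNReal.ofReal (Real.exp (Real.pi / 2 * D p))
          ∂((gaussianVec d).prod (gaussianVec d)) := by
  have hpt : ∀ p : (Fin d → ℝ) × (Fin d → ℝ), ENNReal.ofReal (Real.exp (g p.2 - g p.1))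
      ≤ ∫⁻ s, ENNReal.ofReal (Real.exp (Real.pi / 2 * D (rotV (Real.pi / 2 * s) p)))
        ∂(volume.restrict (Set.Ioc (0:ℝ) 1)) := by
    intro p
    have h := exp_ftc (fun s => g (rotV (Real.pi / 2 * s) p).1)
      (fun s => Real.pi / 2 * D (rotV (Real.pi / 2 * s) p))
      (continuous_const.mul (hD.comp (continuous_rotV_left p))) ?_
    · simpa [rotV] using h
    · intro s
      have h1 := hder p.1 p.2 (Real.pi / 2 * s)
      have h2 : HasDerivAt (fun s : ℝ => Real.pi / 2 * s) (Real.pi / 2) s := by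
        simpa using (hasDerivAt_id s).const_mul (Real.pi / 2)
      have h3 := HasDerivAt.comp s h1 h2
      rw [mul_comm] at h3
      exact h3
  calc _ ≤ ∫⁻ p, ∫⁻ s, ENNReal.ofReal (Real.exp (Real.pi / 2 * D (rotV (Real.pi / 2 * s) p)))
        ∂(volume.restrict (Set.Ioc (0:ℝ) 1)) ∂((gaussianVec d).prod (gaussianVec d)) :=
        lintegral_mono hpt
    _ = ∫⁻ s, ∫⁻ p, ENNReal.ofReal (Real.exp (Real.pi / 2 * D (rotV (Real.pi / 2 * s) p)))
         ∂((gaussianVec d).prod (gaussianVec d)) ∂(volume.restrict (Set.Ioc (0:ℝ) 1)) := by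
      refine lintegral_lintegral_swap ?_
      have : Measurable (fun ps : ((Fin d → ℝ) × (Fin d → ℝ)) × ℝ =>
          D (rotV (Real.pi / 2 * ps.2) ps.1)) :=
        (hD.comp (continuous_rotV.comp continuous_swap)).measurable
      exact (ENNReal.measurable_ofReal.comp
        (Real.measurable_exp.comp (this.const_mul _))).aemeasurable
    _ = ∫⁻ s, ∫⁻ p, ENNReal.ofReal (Real.exp (Real.pi / 2 * D p))
         ∂((gaussianVec d).prod (gaussianVec d)) ∂(volume.restrict (Set.Ioc (0:ℝ) 1)) := by
      refine lintegral_congr fun s => ?_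
      have := (rotation_gaussianVec d (Real.pi / 2 * s)).lintegral_comp
        (f := fun p => ENNReal.ofReal (Real.exp (Real.pi / 2 * D p)))
        (ENNReal.measurable_ofReal.comp
          (Real.measurable_exp.comp (hD.measurable.const_mul _)))
      exact this
    _ = _ := by simp

lemma mgf_centered {d : ℕ} (g : (Fin d → ℝ) → ℝ) (hg : Continuous g)
    (hi : Integrable g (gaussianVec d)) :
    ∫⁻ w, ENNReal.ofReal (Real.exp (g w - ∫ z, g z ∂(gaussianVec d))) ∂(gaussianVec d)
      ≤ ∫⁻ p, ENNReal.ofReal (Real.exp (g p.2 - g p.1))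
        ∂((gaussianVec d).prod (gaussianVec d)) := by
  have hm : Measurable (fun p : (Fin d → ℝ) × (Fin d → ℝ) =>
      ENNReal.ofReal (Real.exp (g p.2 - g p.1))) :=
    ENNReal.measurable_ofReal.comp (Real.measurable_exp.comp
      ((hg.measurable.comp measurable_snd).sub (hg.measurable.comp measurable_fst)))
  rw [lintegral_prod_symm _ hm.aemeasurable]
  refine lintegral_mono fun w => ?_
  have h := jensen_exp (μ := gaussianVec d) (f := fun z => g w - g z)
    ((integrable_const _).sub hi)
  rw [integral_sub (integrable_const _) hi] at h
  simpa using h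

/-- The Gaussian concentration inequality we use. -/
lemma mgf_bound {d n : ℕ} (X : Matrix (Fin d) (Fin n) ℝ) (B : ℝ)
    (hB : ∀ a : Fin n → ℝ, (X *ᵥ a) ⬝ᵥ (X *ᵥ a) ≤ B ^ 2 * ∑ α, a α ^ 2)
    (h h' : ℝ → ℝ) (hh : ∀ x, HasDerivAt h (h' x) x) (hc : Continuous h') (v : Fin n → ℝ)
    (hi : Integrable (fun w => ∑ α, v α * h (w ⬝ᵥ Xᵀ α)) (gaussianVec d)) :
    ∫⁻ w, ENNReal.ofReal (Real.exp ((∑ α, v α * h (w ⬝ᵥ Xᵀ α))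
        - ∫ z, (∑ α, v α * h (z ⬝ᵥ Xᵀ α)) ∂(gaussianVec d))) ∂(gaussianVec d)
      ≤ ∫⁻ w, ENNReal.ofReal (Real.exp (Real.pi ^ 2 / 8 * B ^ 2 *
          ∑ α, v α ^ 2 * h' (w ⬝ᵥ Xᵀ α) ^ 2)) ∂(gaussianVec d) := by
  have hhc : Continuous h := continuous_iff_continuousAt.2 fun x => (hh x).continuousAt
  have hgc : Continuous (fun w : Fin d → ℝ => ∑ α, v α * h (w ⬝ᵥ Xᵀ α)) :=
    continuous_finsetSum _ fun α _ => continuous_const.mul (hhc.comp (continuous_dot _))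
  have hDc : Continuous (fun p : (Fin d → ℝ) × (Fin d → ℝ) =>
      ∑ α, v α * h' (p.1 ⬝ᵥ Xᵀ α) * (p.2 ⬝ᵥ Xᵀ α)) :=
    continuous_finsetSum _ fun α _ =>
      (continuous_const.mul (hc.comp ((continuous_dot _).comp continuous_fst))).mul
        ((continuous_dot _).comp continuous_snd)
  refine (mgf_centered _ hgc hi).trans ?_
  refine (pisier_aux (fun w => ∑ α, v α * h (w ⬝ᵥ Xᵀ α))
    (fun p => ∑ α, v α * h' (p.1 ⬝ᵥ Xᵀ α) * (p.2 ⬝ᵥ Xᵀ α)) hDc ?_).trans ?_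
  · intro w z θ
    refine HasDerivAt.fun_sum fun α _ => ?_
    have h1 : HasDerivAt (fun θ : ℝ => (Real.cos θ • w + Real.sin θ • z) ⬝ᵥ Xᵀ α)
        ((-Real.sin θ • w + Real.cos θ • z) ⬝ᵥ Xᵀ α) θ := by
      simp only [add_dotProduct, smul_dotProduct, smul_eq_mul]
      exact ((Real.hasDerivAt_cos θ).mul_const _).add ((Real.hasDerivAt_sin θ).mul_const _)
    have h2 := (HasDerivAt.comp θ (hh _) h1).const_mul (v α)
    rw [← mul_assoc] at h2
    exact h2
  · rw [lintegral_prod]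
    · refine lintegral_mono fun w => ?_
      let a : Fin n → ℝ := fun α => Real.pi / 2 * (v α * h' (w ⬝ᵥ Xᵀ α))
      have h1 : ∀ z : Fin d → ℝ, Real.pi / 2 * ∑ α, v α * h' (w ⬝ᵥ Xᵀ α) * (z ⬝ᵥ Xᵀ α)
          = z ⬝ᵥ (X *ᵥ a) := by
        intro z
        rw [dotProduct_mulVec, Finset.mul_sum]
        simp only [dotProduct, vecMul, a, transpose_apply]
        refine Finset.sum_congr rfl fun α _ => ?_
        ring
      simp only [h1]
      rw [lintegral_exp_dot]
      refine ENNReal.ofReal_le_ofReal (Real.exp_le_exp.2 ?_)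
      have h2 := hB a
      have h3 : ∑ α, a α ^ 2 = Real.pi ^ 2 / 4 * ∑ α, v α ^ 2 * h' (w ⬝ᵥ Xᵀ α) ^ 2 := by
        rw [Finset.mul_sum]
        refine Finset.sum_congr rfl fun α _ => ?_
        simp only [a]; ring
      rw [h3] at h2
      linarith
    · exact (ENNReal.measurable_ofReal.comp (Real.measurable_exp.comp
        (hDc.measurable.const_mul _))).aemeasurable

lemma integrable_sq_gauss : Integrable (fun z : ℝ => z ^ 2) (gaussianReal 0 1) :=
  (memLp_id_gaussianReal' (μ := 0) (v := 1) 2 (by simp)).integrable_sq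

lemma integral_sq_gauss : ∫ z, z ^ 2 ∂(gaussianReal 0 1) = 1 := by
  have h1 := variance_id_gaussianReal (μ := 0) (v := 1)
  rw [variance_eq_integral aemeasurable_id] at h1
  simpa using h1

lemma gauss_quad {f : ℝ → ℝ} (hf : Continuous f) {a b : ℝ} (h : ∀ z, |f z| ≤ a + b * z ^ 2) :
    Integrable f (gaussianReal 0 1) ∧ |∫ z, f z ∂(gaussianReal 0 1)| ≤ a + b := by
  have hi : Integrable (fun z : ℝ => a + b * z ^ 2) (gaussianReal 0 1) :=
    (integrable_const a).add (integrable_sq_gauss.const_mul b)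
  have hfi : Integrable f (gaussianReal 0 1) :=
    hi.mono' hf.aestronglyMeasurable (ae_of_all _ h)
  refine ⟨hfi, ?_⟩
  calc |∫ z, f z ∂(gaussianReal 0 1)| ≤ ∫ z, |f z| ∂(gaussianReal 0 1) :=
        abs_integral_le_integral_abs
    _ ≤ ∫ z, (a + b * z ^ 2) ∂(gaussianReal 0 1) := integral_mono hfi.abs hi h
    _ = a + b := by
      rw [integral_add (integrable_const a) (integrable_sq_gauss.const_mul b),
        integral_const_mul, integral_sq_gauss]
      simp

structure SigOK (σ σ' : ℝ → ℝ) (l : ℝ) : Prop where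
  der : ∀ x, HasDerivAt σ (σ' x) x
  cont : Continuous σ'
  bd : ∀ x, |σ' x| ≤ l
  mean : ∫ x, σ x ∂(gaussianReal 0 1) = 0
  var : ∫ x, (σ x) ^ 2 ∂(gaussianReal 0 1) = 1

namespace SigOK
variable {σ σ' : ℝ → ℝ} {l : ℝ}

lemma l_nonneg (h : SigOK σ σ' l) : 0 ≤ l := (abs_nonneg _).trans (h.bd 0)

lemma continuous (h : SigOK σ σ' l) : Continuous σ :=
  continuous_iff_continuousAt.2 fun x => (h.der x).continuousAt

lemma lip (h : SigOK σ σ' l) (x y : ℝ) : |σ x - σ y| ≤ l * |x - y| := by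
  have := convex_univ.norm_image_sub_le_of_norm_hasDerivWithin_le (f := σ) (f' := σ') (C := l)
    (s := Set.univ) (x := y) (y := x) (fun x _ => (h.der x).hasDerivWithinAt)
    (fun x _ => h.bd x) (Set.mem_univ _) (Set.mem_univ _)
  simpa using this

lemma lip' (h : SigOK σ σ' l) (c : ℝ) (z : ℝ) : |σ z - σ c| ≤ l * |z - c| := h.lip z c

lemma integrable (h : SigOK σ σ' l) : Integrable σ (gaussianReal 0 1) := by
  refine (gauss_quad h.continuous (a := |σ 0| + l) (b := l) fun z => ?_).1
  have h1 := h.lip z 0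
  have h2 := abs_sub_abs_le_abs_sub (σ z) (σ 0)
  have h3 : |z| ≤ 1 + z ^ 2 := by nlinarith [sq_abs z, sq_nonneg (|z| - 1), abs_nonneg z]
  have := mul_le_mul_of_nonneg_left h3 h.l_nonneg
  simp only [sub_zero] at h1
  linarith

lemma abs_zero_le (h : SigOK σ σ' l) : |σ 0| ≤ l := by
  have h1 := (gauss_quad (f := fun z => σ 0 - σ z) (continuous_const.sub h.continuous)
    (a := l / 2) (b := l / 2) fun z => ?_).2
  · rw [integral_sub (integrable_const _) h.integrable, h.mean] at h1
    simpa using h1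
  · have h1 := h.lip 0 z
    have h3 : |z| ≤ 1 / 2 + z ^ 2 / 2 := by nlinarith [sq_abs z, sq_nonneg (|z| - 1)]
    have := mul_le_mul_of_nonneg_left h3 h.l_nonneg
    simp only [zero_sub, abs_neg] at h1
    linarith

lemma growth (h : SigOK σ σ' l) (x : ℝ) : |σ x| ≤ l * (1 + |x|) := by
  have h1 := h.lip x 0
  have h2 := abs_sub_abs_le_abs_sub (σ x) (σ 0)
  have h3 := h.abs_zero_le
  simp only [sub_zero] at h1
  linarith

lemma growth_sq (h : SigOK σ σ' l) (x : ℝ) : σ x ^ 2 ≤ 2 * l ^ 2 * (1 + x ^ 2) := by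
  have h1 := h.growth x
  have h2 : σ x ^ 2 ≤ (l * (1 + |x|)) ^ 2 := by
    rw [← sq_abs (σ x)]; exact pow_le_pow_left₀ (abs_nonneg _) h1 2
  have h3 : (1 + |x|) ^ 2 ≤ 2 * (1 + x ^ 2) := by nlinarith [sq_abs x, sq_nonneg (|x| - 1)]
  have := mul_le_mul_of_nonneg_left h3 (sq_nonneg l)
  nlinarith

lemma integrable_sq (h : SigOK σ σ' l) : Integrable (fun z => σ z ^ 2) (gaussianReal 0 1) := by
  refine (gauss_quad (f := fun z => σ z ^ 2) (h.continuous.pow 2) (a := 2 * l ^ 2) (b := 2 * l ^ 2) fun z => ?_).1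
  rw [abs_of_nonneg (sq_nonneg _)]
  linarith [h.growth_sq z]

lemma one_le (h : SigOK σ σ' l) : 1 ≤ l := by
  have h1 := (gauss_quad (f := fun z => (σ z - σ 0) ^ 2) (by have := h.continuous; fun_prop)
    (a := 0) (b := l ^ 2) fun z => ?_).2
  · have h2 : ∫ z, (σ z - σ 0) ^ 2 ∂(gaussianReal 0 1) = 1 + σ 0 ^ 2 := by
      have : ∀ z, (σ z - σ 0) ^ 2 = (σ z ^ 2 - 2 * σ 0 * σ z) + σ 0 ^ 2 := fun z => by ring
      simp_rw [this]
      have h3 : Integrable (fun z => 2 * σ 0 * σ z) (gaussianReal 0 1) := h.integrable.const_mul _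
      have h4 : Integrable (fun z => σ z ^ 2 - 2 * σ 0 * σ z) (gaussianReal 0 1) :=
        h.integrable_sq.sub h3
      rw [integral_add h4 (integrable_const _), integral_sub h.integrable_sq h3,
        integral_const_mul, h.mean, h.var]
      simp
    rw [h2, abs_of_nonneg (by positivity)] at h1
    nlinarith [sq_nonneg (σ 0), h.l_nonneg]
  · have h1 := h.lip z 0
    rw [abs_of_nonneg (sq_nonneg _)]
    simp only [sub_zero] at h1
    have := pow_le_pow_left₀ (abs_nonneg _) h1 2
    rw [mul_pow, sq_abs, sq_abs] at this
    linarith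

lemma integrable_scale (h : SigOK σ σ' l) (s : ℝ) :
    Integrable (fun z => σ (s * z)) (gaussianReal 0 1) := by
  refine (gauss_quad (f := fun z => σ (s * z)) (by have := h.continuous; fun_prop)
    (a := 2 * l) (b := l * s ^ 2) fun z => ?_).1
  have h1 := h.growth (s * z)
  have h3 : |s * z| ≤ 1 + (s * z) ^ 2 := by
    nlinarith [sq_abs (s * z), sq_nonneg (|s * z| - 1), abs_nonneg (s * z)]
  have := mul_le_mul_of_nonneg_left h3 h.l_nonneg
  rw [mul_pow] at this
  linarith

lemma integrable_sq_scale (h : SigOK σ σ' l) (s : ℝ) :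
    Integrable (fun z => σ (s * z) ^ 2) (gaussianReal 0 1) := by
  refine (gauss_quad (f := fun z => σ (s * z) ^ 2) (by have := h.continuous; fun_prop)
    (a := 2 * l ^ 2) (b := 2 * l ^ 2 * s ^ 2) fun z => ?_).1
  rw [abs_of_nonneg (sq_nonneg _)]
  linarith [h.growth_sq (s * z), mul_pow s z 2]

lemma mean_scale (h : SigOK σ σ' l) (s : ℝ) :
    |∫ z, σ (s * z) ∂(gaussianReal 0 1)| ≤ l * |s - 1| := by
  have h1 := (gauss_quad (f := fun z => σ (s * z) - σ z)
    (by have := h.continuous; fun_prop)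
    (a := l * |s - 1| / 2) (b := l * |s - 1| / 2) fun z => ?_).2
  · rw [integral_sub (h.integrable_scale s) h.integrable, h.mean] at h1
    simpa using h1
  · have h1 := h.lip (s * z) z
    have h2 : s * z - z = (s - 1) * z := by ring
    rw [h2, abs_mul] at h1
    have h3 : |z| ≤ 1 / 2 + z ^ 2 / 2 := by nlinarith [sq_abs z, sq_nonneg (|z| - 1)]
    have := mul_le_mul_of_nonneg_left h3 (mul_nonneg h.l_nonneg (abs_nonneg (s - 1)))
    linarith

lemma var_scale (h : SigOK σ σ' l) (s : ℝ) (hs : 0 ≤ s) (hs2 : s ≤ 2) :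
    |(∫ z, σ (s * z) ^ 2 ∂(gaussianReal 0 1)) - 1| ≤ 5 * l ^ 2 * |s - 1| := by
  have h1 := (gauss_quad (f := fun z => σ (s * z) ^ 2 - σ z ^ 2)
    (by have := h.continuous; fun_prop)
    (a := l ^ 2 * |s - 1|) (b := 4 * (l ^ 2 * |s - 1|)) fun z => ?_).2
  · rw [integral_sub (h.integrable_sq_scale s) h.integrable_sq, h.var] at h1
    linarith
  · have h1 := h.lip (s * z) z
    have h2 : s * z - z = (s - 1) * z := by ring
    rw [h2, abs_mul] at h1
    have hg1 := h.growth (s * z)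
    have hg2 := h.growth z
    have h4 : |σ (s * z) + σ z| ≤ l * (2 + 3 * |z|) := by
      refine (abs_add_le _ _).trans ?_
      rw [abs_mul, abs_of_nonneg hs] at hg1
      have : s * |z| ≤ 2 * |z| := mul_le_mul_of_nonneg_right hs2 (abs_nonneg z)
      nlinarith [mul_le_mul_of_nonneg_left this h.l_nonneg]
    have h5 : σ (s * z) ^ 2 - σ z ^ 2 = (σ (s * z) - σ z) * (σ (s * z) + σ z) := by ring
    rw [h5, abs_mul]
    calc _ ≤ (l * (|s - 1| * |z|)) * (l * (2 + 3 * |z|)) :=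
          mul_le_mul h1 h4 (abs_nonneg _) ((abs_nonneg _).trans h1)
      _ = (l ^ 2 * |s - 1|) * (2 * |z| + 3 * |z| ^ 2) := by ring
      _ ≤ (l ^ 2 * |s - 1|) * (1 + 4 * z ^ 2) := by
        refine mul_le_mul_of_nonneg_left ?_ (by positivity)
        nlinarith [sq_abs z, sq_nonneg (|z| - 1)]
      _ = _ := by ring

lemma exp_scale (h : SigOK σ σ' l) (s : ℝ) (hs : s ^ 2 ≤ 2) :
    ∫⁻ z, ENNReal.ofReal (Real.exp (σ (s * z) ^ 2 / (16 * l ^ 2))) ∂(gaussianReal 0 1)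
      ≤ ENNReal.ofReal (Real.exp 1) := by
  have hl := h.one_le
  calc _ ≤ ∫⁻ z, ENNReal.ofReal (Real.exp (1/8)) * ENNReal.ofReal (Real.exp (z ^ 2 / 4))
        ∂(gaussianReal 0 1) := by
        refine lintegral_mono fun z => ?_
        rw [← ENNReal.ofReal_mul (Real.exp_pos _).le, ← Real.exp_add]
        refine ENNReal.ofReal_le_ofReal (Real.exp_le_exp.2 ?_)
        rw [div_le_iff₀ (by positivity)]
        have h1 := h.growth_sq (s * z)
        rw [mul_pow] at h1
        have h2 : s ^ 2 * z ^ 2 ≤ 2 * z ^ 2 := mul_le_mul_of_nonneg_right hs (sq_nonneg z)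
        nlinarith [mul_le_mul_of_nonneg_left h2 (sq_nonneg l)]
    _ ≤ ENNReal.ofReal (Real.exp (1/8)) * ENNReal.ofReal 2 := by
        rw [lintegral_const_mul _ (by fun_prop)]
        gcongr
        exact lintegral_exp_sq
    _ ≤ _ := by
        rw [← ENNReal.ofReal_mul (Real.exp_pos _).le]
        refine ENNReal.ofReal_le_ofReal ?_
        have h1 : (2:ℝ) ≤ Real.exp (7/8) := by
          have := Real.sum_le_exp_of_nonneg (x := 7/8) (by norm_num) 4
          simp [Finset.sum_range_succ, Nat.factorial] at this
          norm_num at this ⊢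
          linarith
        calc Real.exp (1/8) * 2 ≤ Real.exp (1/8) * Real.exp (7/8) := by gcongr
          _ = _ := by rw [← Real.exp_add]; norm_num

end SigOK

section transfer
variable {d : ℕ} (x : Fin d → ℝ)

lemma integral_dot_fun {F : ℝ → ℝ} (hF : Continuous F) :
    ∫ w, F (w ⬝ᵥ x) ∂(gaussianVec d) = ∫ z, F (√(x ⬝ᵥ x) * z) ∂(gaussianReal 0 1) := by
  rw [← integral_map (φ := fun w => w ⬝ᵥ x) (f := F) (measurable_dot x).aemeasurable
    hF.aestronglyMeasurable, map_dot', integral_map (by fun_prop) hF.aestronglyMeasurable]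

lemma integrable_dot_fun {F : ℝ → ℝ} (hF : Continuous F)
    (h : Integrable (fun z => F (√(x ⬝ᵥ x) * z)) (gaussianReal 0 1)) :
    Integrable (fun w => F (w ⬝ᵥ x)) (gaussianVec d) := by
  have h1 := (integrable_map_measure (f := fun w : Fin d → ℝ => w ⬝ᵥ x) (g := F)
    (μ := gaussianVec d)
    hF.aestronglyMeasurable (measurable_dot x).aemeasurable).1
  refine h1 ?_
  rw [map_dot', integrable_map_measure hF.aestronglyMeasurable (by fun_prop)]
  exact h

lemma lintegral_dot_fun {F : ℝ → ENNReal} (hF : Measurable F) :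
    ∫⁻ w, F (w ⬝ᵥ x) ∂(gaussianVec d) = ∫⁻ z, F (√(x ⬝ᵥ x) * z) ∂(gaussianReal 0 1) := by
  rw [← lintegral_map (g := fun w => w ⬝ᵥ x) hF (measurable_dot x), map_dot',
    lintegral_map hF (by fun_prop)]

end transfer

lemma exp_le_quad (x : ℝ) : Real.exp x ≤ 1 + x + x ^ 2 * Real.exp |x| := by
  have he : 1 ≤ Real.exp |x| := Real.one_le_exp (abs_nonneg x)
  rcases le_or_gt |x| 1 with h | h
  · have := Real.abs_exp_sub_one_sub_id_le h
    have := (abs_le.1 this).2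
    nlinarith [mul_le_mul_of_nonneg_left he (sq_nonneg x)]
  · rcases lt_abs.1 h with h1 | h1
    · have : |x| = x := abs_of_pos (by linarith)
      rw [this] at he ⊢
      have : 1 * Real.exp x ≤ x ^ 2 * Real.exp x :=
        mul_le_mul_of_nonneg_right (by nlinarith) (by linarith)
      linarith
    · have h2 : Real.exp x ≤ 1 := Real.exp_le_one_iff.2 (by linarith)
      have := mul_le_mul_of_nonneg_left he (sq_nonneg x)
      nlinarith

lemma bern_mgf {Ω : Type*} [MeasurableSpace Ω] {μ : Measure Ω} [IsProbabilityMeasure μ]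
    {Z : Ω → ℝ} (hZ : Measurable Z)
    (h : ∫⁻ w, ENNReal.ofReal (Real.exp |Z w|) ∂μ ≤ ENNReal.ofReal (Real.exp 1))
    {t : ℝ} (ht : |t| ≤ 1 / 2) :
    ∫⁻ w, ENNReal.ofReal (Real.exp (t * (Z w - ∫ z, Z z ∂μ))) ∂μ
      ≤ ENNReal.ofReal (Real.exp (22 * t ^ 2)) := by
  have hE : Integrable (fun w => Real.exp |Z w|) μ := by
    refine ⟨by fun_prop, ?_⟩
    rw [hasFiniteIntegral_iff_ofReal (ae_of_all _ fun _ => (Real.exp_pos _).le)]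
    exact h.trans_lt ENNReal.ofReal_lt_top
  have hEle : ∫ w, Real.exp |Z w| ∂μ ≤ Real.exp 1 := by
    rw [← ofReal_integral_eq_lintegral_ofReal hE (ae_of_all _ fun _ => (Real.exp_pos _).le)] at h
    exact (ENNReal.ofReal_le_ofReal_iff (Real.exp_pos _).le).1 h
  have hZi : Integrable Z μ := by
    refine hE.mono' hZ.aestronglyMeasurable (ae_of_all _ fun w => ?_)
    have := Real.add_one_le_exp |Z w|
    simp only [Real.norm_eq_abs]; linarith
  set m := ∫ z, Z z ∂μ with hm
  have hpt : ∀ w, Real.exp (t * Z w) ≤ (1 + t * Z w) + 8 * t ^ 2 * Real.exp |Z w| := by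
    intro w
    refine (exp_le_quad (t * Z w)).trans ?_
    have h1 : Real.exp |t * Z w| ≤ Real.exp (|Z w| / 2) := by
      rw [Real.exp_le_exp, abs_mul]
      nlinarith [abs_nonneg (Z w)]
    have h2 : Z w ^ 2 ≤ 8 * Real.exp (|Z w| / 2) := by
      have := Real.quadratic_le_exp_of_nonneg (x := |Z w| / 2) (by positivity)
      nlinarith [sq_abs (Z w), abs_nonneg (Z w)]
    have h3 : Real.exp |Z w| = Real.exp (|Z w| / 2) * Real.exp (|Z w| / 2) := by
      rw [← Real.exp_add]; congr 1; ring
    rw [h3]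
    have h4 : Z w ^ 2 * Real.exp |t * Z w|
        ≤ 8 * Real.exp (|Z w| / 2) * Real.exp (|Z w| / 2) :=
      mul_le_mul h2 h1 (Real.exp_pos _).le (by positivity)
    have := mul_le_mul_of_nonneg_left h4 (sq_nonneg t)
    nlinarith
  have hI1 : Integrable (fun w => 1 + t * Z w) μ := (integrable_const 1).add (hZi.const_mul t)
  have hI2 : Integrable (fun w => 8 * t ^ 2 * Real.exp |Z w|) μ := hE.const_mul _
  calc _ ≤ ∫⁻ w, ENNReal.ofReal (Real.exp (-(t * m)) *
        ((1 + t * Z w) + 8 * t ^ 2 * Real.exp |Z w|)) ∂μ := by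
        refine lintegral_mono fun w => ENNReal.ofReal_le_ofReal ?_
        have : t * (Z w - m) = -(t * m) + t * Z w := by ring
        rw [this, Real.exp_add]
        exact mul_le_mul_of_nonneg_left (hpt w) (Real.exp_pos _).le
    _ = ENNReal.ofReal (∫ w, (Real.exp (-(t * m)) *
        ((1 + t * Z w) + 8 * t ^ 2 * Real.exp |Z w|)) ∂μ) := by
        have hI3 : Integrable (fun w => Real.exp (-(t * m)) *
          ((1 + t * Z w) + 8 * t ^ 2 * Real.exp |Z w|)) μ := (hI1.add hI2).const_mul _
        rw [ofReal_integral_eq_lintegral_ofReal hI3]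
        exact ae_of_all _ fun w => mul_nonneg (Real.exp_pos _).le
          ((Real.exp_pos _).le.trans (hpt w))
    _ ≤ _ := by
        refine ENNReal.ofReal_le_ofReal ?_
        rw [integral_const_mul, integral_add hI1 hI2, integral_add (integrable_const 1)
          (hZi.const_mul t), integral_const_mul, integral_const_mul, ← hm]
        simp only [integral_const, probReal_univ, smul_eq_mul, mul_one]
        have h1 : (1 + t * m) + 8 * t ^ 2 * ∫ w, Real.exp |Z w| ∂μ ≤ t * m + 22 * t ^ 2 + 1 := by
          have : ∫ w, Real.exp |Z w| ∂μ ≤ 2.75 := hEle.trans (by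
            have := Real.exp_one_lt_d9; norm_num at this ⊢; linarith)
          nlinarith [sq_nonneg t]
        have h2 := Real.add_one_le_exp (t * m + 22 * t ^ 2)
        calc _ ≤ Real.exp (-(t * m)) * Real.exp (t * m + 22 * t ^ 2) :=
              mul_le_mul_of_nonneg_left (h1.trans h2) (Real.exp_pos _).le
          _ = _ := by rw [← Real.exp_add]; congr 1; ring

lemma bern_tail {d dc : ℕ} {Z : (Fin d → ℝ) → ℝ} (hZ : Measurable Z)
    (h : ∫⁻ w, ENNReal.ofReal (Real.exp |Z w|) ∂(gaussianVec d) ≤ ENNReal.ofReal (Real.exp 1))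
    {ε : ℝ} (h0 : 0 ≤ ε) (h1 : ε ≤ 1) :
    gaussianMat dc d {W | dc * (13 * ε) ≤ |∑ i, (Z (W i) - ∫ z, Z z ∂(gaussianVec d))|}
      ≤ ENNReal.ofReal (2 * Real.exp (-1 * dc * ε ^ 2)) := by
  set m := ∫ z, Z z ∂(gaussianVec d) with hm
  have key : ∀ t : ℝ, |t| = ε / 2 →
      gaussianMat dc d {W | dc * (13 * ε ^ 2 / 2) ≤ ∑ i, t * (Z (W i) - m)}
        ≤ ENNReal.ofReal (Real.exp (-1 * dc * ε ^ 2)) := by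
    intro t ht
    have h2 : |t| ≤ 1 / 2 := by rw [ht]; linarith
    refine (chernoff_rows (fun w => t * (Z w - m)) (by fun_prop) _ _ (bern_mgf hZ h h2)).trans ?_
    refine ENNReal.ofReal_le_ofReal (Real.exp_le_exp.2 ?_)
    rw [← sq_abs t, ht]
    have : (0:ℝ) ≤ dc * ε ^ 2 := by positivity
    nlinarith
  have hk1 := key (ε / 2) (abs_of_nonneg (by linarith))
  have hk2 := key (-(ε / 2)) (by rw [abs_neg]; exact abs_of_nonneg (by linarith))
  have hsub : {W : Fin dc → Fin d → ℝ | dc * (13 * ε) ≤ |∑ i, (Z (W i) - m)|}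
      ⊆ {W | dc * (13 * ε ^ 2 / 2) ≤ ∑ i, ε / 2 * (Z (W i) - m)} ∪
        {W | dc * (13 * ε ^ 2 / 2) ≤ ∑ i, -(ε / 2) * (Z (W i) - m)} := by
    intro W hW
    simp only [Set.mem_ofPred_eq, Set.mem_union, ← Finset.mul_sum] at hW ⊢
    rcases le_abs.1 hW with h3 | h3
    · left; nlinarith
    · right; nlinarith
  refine (measure_mono hsub).trans ((measure_union_le _ _).trans ((add_le_add hk1 hk2).trans ?_))
  rw [← ENNReal.ofReal_add (Real.exp_pos _).le (Real.exp_pos _).le, two_mul]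

lemma dot_self_nonneg {d : ℕ} (x : Fin d → ℝ) : 0 ≤ x ⬝ᵥ x := by
  simp only [dotProduct]; exact Finset.sum_nonneg fun i _ => mul_self_nonneg _

lemma sqrt_sub_one_le {a : ℝ} (ha : 0 ≤ a) : |√a - 1| ≤ |a - 1| := by
  have h1 : a - 1 = (√a - 1) * (√a + 1) := by nlinarith [Real.sq_sqrt ha]
  rw [h1, abs_mul]
  have h2 : 1 ≤ |√a + 1| := by
    rw [abs_of_nonneg (by positivity)]; linarith [Real.sqrt_nonneg a]
  nlinarith [abs_nonneg (√a - 1)]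

namespace SigOK
variable {σ σ' : ℝ → ℝ} {l : ℝ} {d : ℕ}

lemma int_vec (h : SigOK σ σ' l) (x : Fin d → ℝ) :
    Integrable (fun w => σ (w ⬝ᵥ x)) (gaussianVec d) :=
  integrable_dot_fun x h.continuous (h.integrable_scale _)

lemma int_sq_vec (h : SigOK σ σ' l) (x : Fin d → ℝ) :
    Integrable (fun w => σ (w ⬝ᵥ x) ^ 2) (gaussianVec d) :=
  integrable_dot_fun (F := fun y => σ y ^ 2) x (h.continuous.pow 2) (h.integrable_sq_scale _)

lemma mean_vec (h : SigOK σ σ' l) (x : Fin d → ℝ) :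
    |∫ w, σ (w ⬝ᵥ x) ∂(gaussianVec d)| ≤ l * |x ⬝ᵥ x - 1| := by
  rw [integral_dot_fun x h.continuous]
  exact (h.mean_scale _).trans
    (mul_le_mul_of_nonneg_left (sqrt_sub_one_le (dot_self_nonneg x)) h.l_nonneg)

lemma var_vec (h : SigOK σ σ' l) (x : Fin d → ℝ) (hx : x ⬝ᵥ x ≤ 2) :
    |(∫ w, σ (w ⬝ᵥ x) ^ 2 ∂(gaussianVec d)) - 1| ≤ 5 * l ^ 2 * |x ⬝ᵥ x - 1| := by
  rw [integral_dot_fun (F := fun y => σ y ^ 2) x (h.continuous.pow 2)]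
  refine (h.var_scale _ (Real.sqrt_nonneg _) ?_).trans
    (mul_le_mul_of_nonneg_left (sqrt_sub_one_le (dot_self_nonneg x)) (by positivity))
  rw [Real.sqrt_le_left (by norm_num)]; linarith

lemma exp_vec (h : SigOK σ σ' l) (x : Fin d → ℝ) (hx : x ⬝ᵥ x ≤ 2) :
    ∫⁻ w, ENNReal.ofReal (Real.exp (σ (w ⬝ᵥ x) ^ 2 / (16 * l ^ 2))) ∂(gaussianVec d)
      ≤ ENNReal.ofReal (Real.exp 1) := by
  have hc := h.continuous
  rw [lintegral_dot_fun (F := fun y => ENNReal.ofReal (Real.exp (σ y ^ 2 / (16 * l ^ 2)))) x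
    (by fun_prop)]
  exact h.exp_scale _ (by rw [Real.sq_sqrt (dot_self_nonneg x)]; exact hx)

lemma meas_vec (h : SigOK σ σ' l) (x : Fin d → ℝ) : Measurable (fun w => σ (w ⬝ᵥ x)) :=
  h.continuous.measurable.comp (measurable_dot x)

lemma exp_prod (h : SigOK σ σ' l) (x y : Fin d → ℝ) (hx : x ⬝ᵥ x ≤ 2) (hy : y ⬝ᵥ y ≤ 2) :
    ∫⁻ w, ENNReal.ofReal (Real.exp |σ (w ⬝ᵥ x) * σ (w ⬝ᵥ y) / (16 * l ^ 2)|) ∂(gaussianVec d)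
      ≤ ENNReal.ofReal (Real.exp 1) := by
  have hl := h.one_le
  have hmx := h.meas_vec x
  have hmy := h.meas_vec y
  have key : ∀ p q : ℝ, Real.exp |p * q / (16 * l ^ 2)| ≤
      1/2 * Real.exp (p ^ 2 / (16 * l ^ 2)) + 1/2 * Real.exp (q ^ 2 / (16 * l ^ 2)) := by
    intro p q
    have h1 := convexOn_exp.2 (Set.mem_univ (p ^ 2 / (16 * l ^ 2)))
      (Set.mem_univ (q ^ 2 / (16 * l ^ 2))) (by norm_num : (0:ℝ) ≤ 1/2)
      (by norm_num : (0:ℝ) ≤ 1/2) (by norm_num)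
    simp only [smul_eq_mul] at h1
    refine le_trans (Real.exp_le_exp.2 ?_) h1
    rw [abs_div, abs_mul, abs_of_pos (by positivity : 0 < 16 * l ^ 2)]
    have : |p| * |q| ≤ 1/2 * p ^ 2 + 1/2 * q ^ 2 := by
      nlinarith [sq_abs p, sq_abs q, sq_nonneg (|p| - |q|)]
    calc _ ≤ (1/2 * p ^ 2 + 1/2 * q ^ 2) / (16 * l ^ 2) := by gcongr
      _ = _ := by ring
  calc _ ≤ ∫⁻ w, (ENNReal.ofReal (1/2) * ENNReal.ofReal (Real.exp (σ (w ⬝ᵥ x) ^ 2 / (16 * l ^ 2)))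
        + ENNReal.ofReal (1/2) * ENNReal.ofReal (Real.exp (σ (w ⬝ᵥ y) ^ 2 / (16 * l ^ 2))))
        ∂(gaussianVec d) := by
        refine lintegral_mono fun w => ?_
        rw [← ENNReal.ofReal_mul (by norm_num), ← ENNReal.ofReal_mul (by norm_num),
          ← ENNReal.ofReal_add (by positivity) (by positivity)]
        exact ENNReal.ofReal_le_ofReal (key _ _)
    _ ≤ ENNReal.ofReal (1/2) * ENNReal.ofReal (Real.exp 1)
        + ENNReal.ofReal (1/2) * ENNReal.ofReal (Real.exp 1) := by
        have hm1 : Measurable (fun w : Fin d → ℝ =>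
            ENNReal.ofReal (Real.exp (σ (w ⬝ᵥ x) ^ 2 / (16 * l ^ 2)))) :=
          ENNReal.measurable_ofReal.comp (Real.measurable_exp.comp ((hmx.pow_const 2).div_const _))
        have hm2 : Measurable (fun w : Fin d → ℝ =>
            ENNReal.ofReal (Real.exp (σ (w ⬝ᵥ y) ^ 2 / (16 * l ^ 2)))) :=
          ENNReal.measurable_ofReal.comp (Real.measurable_exp.comp ((hmy.pow_const 2).div_const _))
        rw [lintegral_add_left (hm1.const_mul _), lintegral_const_mul _ hm1,
          lintegral_const_mul _ hm2]
        gcongr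
        · exact h.exp_vec x hx
        · exact h.exp_vec y hy
    _ = _ := by
        rw [← ENNReal.ofReal_mul (by norm_num), ← ENNReal.ofReal_add (by positivity)
          (by positivity)]
        congr 1; ring

lemma int_prod (h : SigOK σ σ' l) (x y : Fin d → ℝ) :
    Integrable (fun w => σ (w ⬝ᵥ x) * σ (w ⬝ᵥ y)) (gaussianVec d) := by
  refine ((h.int_sq_vec x).add (h.int_sq_vec y)).mono'
    ((h.meas_vec x).mul (h.meas_vec y)).aestronglyMeasurable (ae_of_all _ fun w => ?_)
  simp only [Real.norm_eq_abs, abs_mul, Pi.add_apply]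
  nlinarith [sq_abs (σ (w ⬝ᵥ x)), sq_abs (σ (w ⬝ᵥ y)), sq_nonneg (|σ (w ⬝ᵥ x)| - |σ (w ⬝ᵥ y)|),
    abs_nonneg (σ (w ⬝ᵥ x)), abs_nonneg (σ (w ⬝ᵥ y))]

lemma integrable_dot_sq (x : Fin d → ℝ) :
    Integrable (fun w => (w ⬝ᵥ x) ^ 2) (gaussianVec d) := by
  refine integrable_dot_fun (F := fun y => y ^ 2) x (by fun_prop) ?_
  simp_rw [mul_pow]
  exact integrable_sq_gauss.const_mul _

lemma integral_dot_sq (x : Fin d → ℝ) :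
    ∫ w, (w ⬝ᵥ x) ^ 2 ∂(gaussianVec d) = x ⬝ᵥ x := by
  rw [integral_dot_fun (F := fun y => y ^ 2) x (by fun_prop)]
  simp_rw [mul_pow]
  rw [integral_const_mul, integral_sq_gauss, Real.sq_sqrt (dot_self_nonneg x), mul_one]

lemma mean_prod (h : SigOK σ σ' l) (x y : Fin d → ℝ) {ε : ℝ} (hx : |x ⬝ᵥ x - 1| ≤ ε)
    (hy : |y ⬝ᵥ y - 1| ≤ ε) (hxy : |x ⬝ᵥ y| ≤ ε) (hε : ε < 1) :
    |∫ w, σ (w ⬝ᵥ x) * σ (w ⬝ᵥ y) ∂(gaussianVec d)| ≤ 12 * l ^ 2 * ε := by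
  have hε0 : 0 ≤ ε := (abs_nonneg _).trans hx
  have hx' := abs_le.1 hx
  have hy' := abs_le.1 hy
  have hl2 : 0 ≤ l ^ 2 := sq_nonneg l
  rcases le_or_gt (1/2) ε with hc | hc
  · have hI : Integrable (fun w => l ^ 2 * (2 + ((w ⬝ᵥ x) ^ 2 + (w ⬝ᵥ y) ^ 2))) (gaussianVec d) :=
      ((integrable_const _).add ((integrable_dot_sq x).add (integrable_dot_sq y))).const_mul _
    calc _ ≤ ∫ w, |σ (w ⬝ᵥ x) * σ (w ⬝ᵥ y)| ∂(gaussianVec d) := abs_integral_le_integral_abs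
      _ ≤ ∫ w, l ^ 2 * (2 + ((w ⬝ᵥ x) ^ 2 + (w ⬝ᵥ y) ^ 2)) ∂(gaussianVec d) := by
        refine integral_mono (h.int_prod x y).abs hI fun w => ?_
        have h1 := h.growth_sq (w ⬝ᵥ x)
        have h2 := h.growth_sq (w ⬝ᵥ y)
        simp only [abs_mul]
        nlinarith [sq_abs (σ (w ⬝ᵥ x)), sq_abs (σ (w ⬝ᵥ y)),
          sq_nonneg (|σ (w ⬝ᵥ x)| - |σ (w ⬝ᵥ y)|)]
      _ = l ^ 2 * (2 + (x ⬝ᵥ x + y ⬝ᵥ y)) := by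
        have hI4 : Integrable (fun w => (w ⬝ᵥ x) ^ 2 + (w ⬝ᵥ y) ^ 2) (gaussianVec d) :=
          (integrable_dot_sq x).add (integrable_dot_sq y)
        rw [integral_const_mul, integral_add (integrable_const _) hI4,
          integral_add (integrable_dot_sq x) (integrable_dot_sq y), integral_dot_sq,
          integral_dot_sq]
        simp
      _ ≤ l ^ 2 * 6 := mul_le_mul_of_nonneg_left (by linarith) hl2
      _ ≤ _ := by nlinarith
  · have hxx : 1/2 ≤ x ⬝ᵥ x := by linarith
    have hxpos : 0 < x ⬝ᵥ x := by linarith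
    set r := (x ⬝ᵥ y) / (x ⬝ᵥ x) with hr
    have hrx : r * (x ⬝ᵥ x) = x ⬝ᵥ y := div_mul_cancel₀ _ hxpos.ne'
    have hr2 : |r| ≤ 2 * ε := by
      rw [hr, abs_div, abs_of_pos hxpos, div_le_iff₀ hxpos]
      nlinarith
    set u := y - r • x with hu
    have hxu : x ⬝ᵥ u = 0 := by
      rw [hu, dotProduct_sub, dotProduct_smul, smul_eq_mul, hrx, sub_self]
    have huu : u ⬝ᵥ u = y ⬝ᵥ y - r * (x ⬝ᵥ y) := by
      have : u ⬝ᵥ u = y ⬝ᵥ u - r * (x ⬝ᵥ u) := by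
        conv_lhs => rw [hu, sub_dotProduct, smul_dotProduct, smul_eq_mul, ← hu]
      rw [this, hxu, hu, dotProduct_sub, dotProduct_smul, dotProduct_comm y x]
      simp
    have huu1 : |u ⬝ᵥ u - 1| ≤ 2 * ε := by
      have h1 : |r * (x ⬝ᵥ y)| ≤ 2 * ε * ε := by
        rw [abs_mul]; exact mul_le_mul hr2 hxy (abs_nonneg _) (by linarith)
      have h2 := abs_le.1 h1
      rw [huu, abs_le]
      constructor <;> nlinarith
    have hind := (indep_dot x u hxu).comp h.continuous.measurable h.continuous.measurable
    have hprod : ∫ w, σ (w ⬝ᵥ x) * σ (w ⬝ᵥ u) ∂(gaussianVec d)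
        = (∫ w, σ (w ⬝ᵥ x) ∂(gaussianVec d)) * ∫ w, σ (w ⬝ᵥ u) ∂(gaussianVec d) :=
      hind.integral_fun_mul_eq_mul_integral (h.meas_vec x).aestronglyMeasurable
        (h.meas_vec u).aestronglyMeasurable
    have h1 : |∫ w, σ (w ⬝ᵥ x) * σ (w ⬝ᵥ u) ∂(gaussianVec d)| ≤ l ^ 2 * ε := by
      rw [hprod, abs_mul]
      have a1 := (h.mean_vec x).trans (mul_le_mul_of_nonneg_left hx h.l_nonneg)
      have a2 := (h.mean_vec u).trans (mul_le_mul_of_nonneg_left huu1 h.l_nonneg)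
      have a3 := mul_le_mul a1 a2 (abs_nonneg _) (mul_nonneg h.l_nonneg hε0)
      refine a3.trans ?_
      have : ε * (2 * ε) ≤ ε := by nlinarith
      nlinarith [mul_le_mul_of_nonneg_left this hl2]
    have hI2 : Integrable (fun w => l ^ 2 * |r| * (1/2 + 3/2 * (w ⬝ᵥ x) ^ 2)) (gaussianVec d) :=
      ((integrable_const _).add ((integrable_dot_sq x).const_mul _)).const_mul _
    have h2 : |∫ w, (σ (w ⬝ᵥ x) * σ (w ⬝ᵥ y) - σ (w ⬝ᵥ x) * σ (w ⬝ᵥ u)) ∂(gaussianVec d)|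
        ≤ 7 * l ^ 2 * ε := by
      calc _ ≤ ∫ w, |σ (w ⬝ᵥ x) * σ (w ⬝ᵥ y) - σ (w ⬝ᵥ x) * σ (w ⬝ᵥ u)| ∂(gaussianVec d) :=
            abs_integral_le_integral_abs
        _ ≤ ∫ w, l ^ 2 * |r| * (1/2 + 3/2 * (w ⬝ᵥ x) ^ 2) ∂(gaussianVec d) := by
          refine integral_mono ((h.int_prod x y).sub (h.int_prod x u)).abs hI2 fun w => ?_
          have b1 := h.growth (w ⬝ᵥ x)
          have b2 := h.lip (w ⬝ᵥ y) (w ⬝ᵥ u)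
          have b3 : w ⬝ᵥ y - w ⬝ᵥ u = r * (w ⬝ᵥ x) := by
            rw [hu, dotProduct_sub, dotProduct_smul, smul_eq_mul]; ring
          rw [b3, abs_mul] at b2
          simp only [← mul_sub, abs_mul]
          calc _ ≤ (l * (1 + |w ⬝ᵥ x|)) * (l * (|r| * |w ⬝ᵥ x|)) :=
                mul_le_mul b1 b2 (abs_nonneg _) ((abs_nonneg _).trans b1)
            _ = l ^ 2 * |r| * (|w ⬝ᵥ x| + |w ⬝ᵥ x| ^ 2) := by ring
            _ ≤ _ := by
              refine mul_le_mul_of_nonneg_left ?_ (by positivity)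
              nlinarith [sq_abs (w ⬝ᵥ x), sq_nonneg (|w ⬝ᵥ x| - 1)]
        _ = l ^ 2 * |r| * (1/2 + 3/2 * (x ⬝ᵥ x)) := by
          rw [integral_const_mul, integral_add (integrable_const _)
            ((integrable_dot_sq x).const_mul _), integral_const_mul, integral_dot_sq]
          simp
        _ ≤ l ^ 2 * (2 * ε) * (7/2) := by
          refine mul_le_mul (mul_le_mul_of_nonneg_left hr2 hl2) (by linarith) (by linarith)
            (by positivity)
        _ = _ := by ring
    rw [integral_sub (h.int_prod x y) (h.int_prod x u)] at h2
    have h3 := abs_le.1 h1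
    have h4 := abs_le.1 h2
    have : 0 ≤ l ^ 2 * ε := by positivity
    rw [abs_le]; constructor <;> linarith

end SigOK

lemma exists_net (n : ℕ) : ∃ N : Finset (EuclideanSpace ℝ (Fin n)), N.card ≤ 5 ^ n ∧
    (∀ v ∈ N, ‖v‖ ≤ 1) ∧ ∀ u : EuclideanSpace ℝ (Fin n), ‖u‖ ≤ 1 → ∃ v ∈ N, ‖u - v‖ ≤ 1 / 2 := by
  classical
  let P : ℕ → Prop := fun k => ∃ s : Finset (EuclideanSpace ℝ (Fin n)), s.card = k ∧
    (∀ c ∈ s, ‖c‖ ≤ 2) ∧ (∀ c ∈ s, ∀ e ∈ s, c ≠ e → 1 ≤ ‖c - e‖)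
  have hb : ∀ k, P k → k ≤ 5 ^ n := by
    rintro k ⟨s, rfl, h1, h2⟩
    have := Besicovitch.card_le_of_separated s h1 h2
    simpa using this
  have h0 : P 0 := ⟨∅, by simp⟩
  obtain ⟨s, hs, h1, h2⟩ := Nat.findGreatest_spec (P := P) (Nat.zero_le (5 ^ n)) h0
  refine ⟨s.image (fun x => (1/2 : ℝ) • x), Finset.card_image_le.trans ?_, ?_, ?_⟩
  · rw [hs]; exact Nat.findGreatest_le _
  · intro v hv
    obtain ⟨x, hx, rfl⟩ := Finset.mem_image.1 hv
    rw [norm_smul]; have := h1 x hx; norm_num; linarith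
  · intro u hu
    by_contra hcon
    push Not at hcon
    have hsep : ∀ c ∈ s, 1 ≤ ‖(2:ℝ) • u - c‖ := by
      intro c hc
      have := hcon _ (Finset.mem_image_of_mem _ hc)
      have h3 : (2:ℝ) • u - c = (2:ℝ) • (u - (1/2 : ℝ) • c) := by
        rw [smul_sub, smul_smul]; norm_num
      rw [h3, norm_smul]; norm_num; linarith
    have hnot : (2:ℝ) • u ∉ s := fun hm => by
      have := hsep _ hm; rw [sub_self, norm_zero] at this; linarith
    have hP : P (s.card + 1) := by
      refine ⟨insert ((2:ℝ) • u) s, Finset.card_insert_of_notMem hnot, ?_, ?_⟩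
      · intro c hc
        rcases Finset.mem_insert.1 hc with rfl | hc
        · rw [norm_smul]; norm_num; linarith
        · exact h1 c hc
      · intro c hc e he hne
        rcases Finset.mem_insert.1 hc with rfl | hc <;> rcases Finset.mem_insert.1 he with rfl | he
        · exact absurd rfl hne
        · exact hsep e he
        · rw [norm_sub_rev]; exact hsep c hc
        · exact h2 c hc e he hne
    have := Nat.le_findGreatest (hb _ hP) hP
    omega

lemma net_lin {n : ℕ} {N : Finset (EuclideanSpace ℝ (Fin n))}
    (hN : ∀ u : EuclideanSpace ℝ (Fin n), ‖u‖ ≤ 1 → ∃ v ∈ N, ‖u - v‖ ≤ 1 / 2)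
    (F : EuclideanSpace ℝ (Fin n)) {K : ℝ} (hK : 0 ≤ K) (h : ∀ v ∈ N, inner ℝ v F ≤ K) :
    ‖F‖ ≤ 2 * K := by
  rcases eq_or_ne F 0 with rfl | hF
  · simpa using hK
  have hF' : 0 < ‖F‖ := norm_pos_iff.2 hF
  obtain ⟨v, hv, huv⟩ := hN (‖F‖⁻¹ • F) (by rw [norm_smul]; simp [hF'.ne'])
  have h1 : inner ℝ (‖F‖⁻¹ • F) F = ‖F‖ := by
    rw [real_inner_smul_left, real_inner_self_eq_norm_sq]; field_simp
  have h2 : inner ℝ (‖F‖⁻¹ • F - v) F ≤ 1/2 * ‖F‖ :=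
    (real_inner_le_norm _ _).trans (mul_le_mul_of_nonneg_right huv hF'.le)
  rw [inner_sub_left, h1] at h2
  have := h v hv
  linarith

lemma net_op {n m : ℕ} {N : Finset (EuclideanSpace ℝ (Fin n))}
    (hN : ∀ u : EuclideanSpace ℝ (Fin n), ‖u‖ ≤ 1 → ∃ v ∈ N, ‖u - v‖ ≤ 1 / 2)
    (A : EuclideanSpace ℝ (Fin n) →L[ℝ] EuclideanSpace ℝ (Fin m)) {K : ℝ} (hK : 0 ≤ K)
    (h : ∀ v ∈ N, ‖A v‖ ≤ K) : ‖A‖ ≤ 2 * K := by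
  have : ‖A‖ ≤ K + ‖A‖ / 2 := by
    refine A.opNorm_le_of_unit_norm (by positivity) fun u hu => ?_
    obtain ⟨v, hv, huv⟩ := hN u hu.le
    have h1 : A u = A v + A (u - v) := by rw [map_sub]; abel
    rw [h1]
    refine (norm_add_le _ _).trans (add_le_add (h v hv) ((A.le_opNorm _).trans ?_))
    have := mul_le_mul_of_nonneg_left huv (norm_nonneg A)
    linarith
  linarith

lemma opNorm_bound {d n : ℕ} {X : Matrix (Fin d) (Fin n) ℝ} {B : ℝ} (h : opNorm X ≤ B)
    (a : Fin n → ℝ) : (X *ᵥ a) ⬝ᵥ (X *ᵥ a) ≤ B ^ 2 * ∑ α, a α ^ 2 := by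
  have h1 := (LinearMap.toContinuousLinearMap (Matrix.toEuclideanLin X)).le_opNorm (WithLp.toLp 2 a)
  have h2 : ‖(LinearMap.toContinuousLinearMap (Matrix.toEuclideanLin X)) (WithLp.toLp 2 a)‖
      ≤ B * ‖WithLp.toLp 2 a‖ := h1.trans (mul_le_mul_of_nonneg_right h (norm_nonneg _))
  have h3 := pow_le_pow_left₀ (norm_nonneg _) h2 2
  rw [mul_pow, EuclideanSpace.norm_sq_eq, EuclideanSpace.norm_sq_eq] at h3
  simp only [Real.norm_eq_abs, sq_abs] at h3
  simpa [dotProduct, pow_two, Matrix.toLpLin_apply] using h3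

lemma opNorm_net {m n : ℕ} {N : Finset (EuclideanSpace ℝ (Fin n))}
    (hN : ∀ u : EuclideanSpace ℝ (Fin n), ‖u‖ ≤ 1 → ∃ v ∈ N, ‖u - v‖ ≤ 1 / 2)
    (A : Matrix (Fin m) (Fin n) ℝ) {K : ℝ} (hK : 0 ≤ K)
    (h : ∀ v ∈ N, ∑ i, (∑ α, v α * A i α) ^ 2 ≤ K ^ 2) : opNorm A ≤ 2 * K := by
  refine net_op hN _ hK fun v hv => ?_
  refine abs_le_of_sq_le_sq' ?_ hK |>.2
  rw [EuclideanSpace.norm_sq_eq]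
  simp only [Real.norm_eq_abs, sq_abs]
  refine le_trans (le_of_eq ?_) (h v hv)
  refine Finset.sum_congr rfl fun i _ => ?_
  congr 1
  simp [Matrix.toLpLin_apply, Matrix.mulVec, dotProduct, mul_comm]

lemma sum_net {n : ℕ} {N : Finset (EuclideanSpace ℝ (Fin n))}
    (hN : ∀ u : EuclideanSpace ℝ (Fin n), ‖u‖ ≤ 1 → ∃ v ∈ N, ‖u - v‖ ≤ 1 / 2)
    (F : Fin n → ℝ) {K : ℝ} (hK : 0 ≤ K)
    (h : ∀ v ∈ N, ∑ α, v α * F α ≤ K) : ∑ α, F α ^ 2 ≤ (2 * K) ^ 2 := by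
  have h1 := net_lin hN (WithLp.toLp 2 F) hK fun v hv => by
    refine le_trans (le_of_eq ?_) (h v hv)
    simp [PiLp.inner_apply, mul_comm]
  have h3 := pow_le_pow_left₀ (norm_nonneg _) h1 2
  rw [EuclideanSpace.norm_sq_eq] at h3
  simpa using h3

lemma net_sq {n : ℕ} {v : EuclideanSpace ℝ (Fin n)} (h : ‖v‖ ≤ 1) : ∑ α, v α ^ 2 ≤ 1 := by
  have h3 := pow_le_pow_left₀ (norm_nonneg _) h 2
  rw [EuclideanSpace.norm_sq_eq] at h3
  simpa using h3

lemma union_net {Ω E : Type*} [MeasurableSpace Ω] {μ : Measure Ω} {n : ℕ} (N : Finset E)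
    (hN : N.card ≤ 5 ^ n) (S : E → Set Ω)
    (h : ∀ v ∈ N, μ (S v) ≤ ENNReal.ofReal (Real.exp (-3 * n))) :
    μ (⋃ v ∈ N, S v) ≤ ENNReal.ofReal (Real.exp (-1 * n)) := by
  refine (measure_biUnion_finset_le N S).trans ((Finset.sum_le_sum h).trans ?_)
  rw [Finset.sum_const, nsmul_eq_mul]
  have h1 : ((N.card : ℕ) : ENNReal) = ENNReal.ofReal (N.card : ℝ) := by simp
  rw [h1, ← ENNReal.ofReal_mul (by positivity)]
  refine ENNReal.ofReal_le_ofReal ?_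
  have h2 : (N.card : ℝ) ≤ 5 ^ n := by exact_mod_cast hN
  have h5 : (5:ℝ) ≤ Real.exp 2 := by
    have : Real.exp 2 = Real.exp 1 ^ 2 := by rw [← Real.exp_nat_mul]; norm_num
    rw [this]
    nlinarith [Real.exp_one_gt_d9]
  have h3 : (N.card : ℝ) ≤ Real.exp (n * 2) := by
    rw [Real.exp_nat_mul]
    exact h2.trans (pow_le_pow_left₀ (by norm_num) h5 n)
  calc _ ≤ Real.exp (n * 2) * Real.exp (-3 * n) := by gcongr
    _ = _ := by rw [← Real.exp_add]; congr 1; ring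

lemma lintegral_exp_lin (s : ℝ) :
    ∫⁻ z, ENNReal.ofReal (Real.exp (z * s)) ∂(gaussianReal 0 1)
      = ENNReal.ofReal (Real.exp (s ^ 2 / 2)) := by
  have h1 : Integrable (fun z => Real.exp (s * z)) (gaussianReal 0 1) := integrable_exp_mul_gaussianReal s
  have h2 := congrFun (mgf_id_gaussianReal (μ := 0) (v := 1)) s
  simp only [mgf, id] at h2
  simp_rw [mul_comm _ s]
  rw [← ofReal_integral_eq_lintegral_ofReal h1 (ae_of_all _ fun _ => (Real.exp_pos _).le), h2]
  simp

lemma subg_sq {Ω : Type*} [MeasurableSpace Ω] {μ : Measure Ω} [IsProbabilityMeasure μ]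
    {Y : Ω → ℝ} (hY : Measurable Y) {k : ℝ} (hk : 0 < k)
    (h : ∀ t : ℝ, ∫⁻ w, ENNReal.ofReal (Real.exp (t * Y w)) ∂μ
      ≤ ENNReal.ofReal (Real.exp (k * t ^ 2 / 2))) :
    ∫⁻ w, ENNReal.ofReal (Real.exp (Y w ^ 2 / (4 * k))) ∂μ ≤ ENNReal.ofReal 2 := by
  set r := √(2 * k) with hr
  have hrpos : 0 < r := Real.sqrt_pos.2 (by positivity)
  have hr2 : r ^ 2 = 2 * k := Real.sq_sqrt (by positivity)
  calc _ = ∫⁻ w, ∫⁻ z, ENNReal.ofReal (Real.exp (z * (Y w / r))) ∂(gaussianReal 0 1) ∂μ := by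
        refine lintegral_congr fun w => ?_
        rw [lintegral_exp_lin, div_pow, hr2]
        congr 2; field_simp; ring
    _ = ∫⁻ z, ∫⁻ w, ENNReal.ofReal (Real.exp (z * (Y w / r))) ∂μ ∂(gaussianReal 0 1) := by
        refine lintegral_lintegral_swap (Measurable.aemeasurable ?_)
        have : Measurable (fun p : Ω × ℝ => Real.exp (p.2 * (Y p.1 / r))) :=
          Real.measurable_exp.comp (measurable_snd.mul ((hY.comp measurable_fst).div_const r))
        exact ENNReal.measurable_ofReal.comp this
    _ ≤ ∫⁻ z, ENNReal.ofReal (Real.exp (z ^ 2 / 4)) ∂(gaussianReal 0 1) := by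
        refine lintegral_mono fun z => ?_
        have h1 := h (z / r)
        have h2 : k * (z / r) ^ 2 / 2 = z ^ 2 / 4 := by
          rw [div_pow, hr2]; field_simp; ring
        rw [h2] at h1
        refine le_trans (le_of_eq (lintegral_congr fun w => ?_)) h1
        congr 2; ring
    _ ≤ _ := lintegral_exp_sq

lemma pi_sq_le : Real.pi ^ 2 ≤ 10 := by
  nlinarith [Real.pi_lt_d2, Real.pi_pos]

namespace SigOK
variable {σ σ' : ℝ → ℝ} {l : ℝ} {d n : ℕ}

lemma int_comb (h : SigOK σ σ' l) (X : Matrix (Fin d) (Fin n) ℝ) (v : Fin n → ℝ) :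
    Integrable (fun w => ∑ α, v α * σ (w ⬝ᵥ Xᵀ α)) (gaussianVec d) :=
  integrable_finsetSum _ fun _ _ => (h.int_vec _).const_mul _

lemma meas_comb (h : SigOK σ σ' l) (X : Matrix (Fin d) (Fin n) ℝ) (v : Fin n → ℝ) :
    Measurable (fun w => ∑ α, v α * σ (w ⬝ᵥ Xᵀ α)) :=
  Finset.measurable_fun_sum _ fun _ _ => (h.meas_vec _).const_mul _

lemma comb_mgf (h : SigOK σ σ' l) (X : Matrix (Fin d) (Fin n) ℝ) (B : ℝ)
    (hB : ∀ a : Fin n → ℝ, (X *ᵥ a) ⬝ᵥ (X *ᵥ a) ≤ B ^ 2 * ∑ α, a α ^ 2)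
    (v : Fin n → ℝ) (hv : ∑ α, v α ^ 2 ≤ 1) (t : ℝ) :
    ∫⁻ w, ENNReal.ofReal (Real.exp (t * ((∑ α, v α * σ (w ⬝ᵥ Xᵀ α))
        - ∫ z, (∑ α, v α * σ (z ⬝ᵥ Xᵀ α)) ∂(gaussianVec d)))) ∂(gaussianVec d)
      ≤ ENNReal.ofReal (Real.exp ((5/2 * l ^ 2 * B ^ 2) * t ^ 2 / 2)) := by
  have h1 := mgf_bound X B hB σ σ' h.der h.cont (fun α => t * v α) (h.int_comb X _)
  simp only [mul_assoc t, ← Finset.mul_sum, integral_const_mul, ← mul_sub] at h1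
  refine h1.trans ?_
  refine (lintegral_mono (g := fun _ => ENNReal.ofReal (Real.exp ((5/2 * l ^ 2 * B ^ 2) * t ^ 2 / 2)))
    fun w => ENNReal.ofReal_le_ofReal (Real.exp_le_exp.2 ?_)).trans ?_
  · have h2 : ∑ α, (t * v α) ^ 2 * σ' (w ⬝ᵥ Xᵀ α) ^ 2 ≤ t ^ 2 * l ^ 2 := by
      calc _ ≤ ∑ α, (t ^ 2 * l ^ 2) * v α ^ 2 := by
            refine Finset.sum_le_sum fun α _ => ?_
            have : σ' (w ⬝ᵥ Xᵀ α) ^ 2 ≤ l ^ 2 := by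
              rw [← sq_abs]; exact pow_le_pow_left₀ (abs_nonneg _) (h.bd _) 2
            calc _ ≤ (t * v α) ^ 2 * l ^ 2 := mul_le_mul_of_nonneg_left this (sq_nonneg _)
              _ = _ := by ring
        _ = (t ^ 2 * l ^ 2) * ∑ α, v α ^ 2 := by rw [Finset.mul_sum]
        _ ≤ (t ^ 2 * l ^ 2) * 1 := mul_le_mul_of_nonneg_left hv (by positivity)
        _ = _ := mul_one _
    calc _ ≤ Real.pi ^ 2 / 8 * B ^ 2 * (t ^ 2 * l ^ 2) :=
          mul_le_mul_of_nonneg_left h2 (by positivity)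
      _ ≤ 10 / 8 * B ^ 2 * (t ^ 2 * l ^ 2) := by gcongr; exact pi_sq_le
      _ = _ := by ring
  · simp

lemma comb_mean (h : SigOK σ σ' l) (X : Matrix (Fin d) (Fin n) ℝ) (B : ℝ)
    (hX : ∑ α, (Xᵀ α ⬝ᵥ Xᵀ α - 1) ^ 2 ≤ B ^ 2)
    (v : Fin n → ℝ) (hv : ∑ α, v α ^ 2 ≤ 1) :
    (∫ z, (∑ α, v α * σ (z ⬝ᵥ Xᵀ α)) ∂(gaussianVec d)) ^ 2 ≤ l ^ 2 * B ^ 2 := by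
  have e : ∫ z, (∑ α, v α * σ (z ⬝ᵥ Xᵀ α)) ∂(gaussianVec d)
      = ∑ α, v α * ∫ z, σ (z ⬝ᵥ Xᵀ α) ∂(gaussianVec d) := by
    have := integral_finsetSum (μ := gaussianVec d) Finset.univ
      (f := fun (α : Fin n) w => v α * σ (w ⬝ᵥ Xᵀ α)) fun _ _ => (h.int_vec _).const_mul _
    refine this.trans (Finset.sum_congr rfl fun α _ => integral_const_mul _ _)
  rw [e]
  refine (Finset.sum_mul_sq_le_sq_mul_sq _ _ _).trans ?_
  have h1 : ∑ α, (∫ z, σ (z ⬝ᵥ Xᵀ α) ∂(gaussianVec d)) ^ 2 ≤ l ^ 2 * B ^ 2 := by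
    calc _ ≤ ∑ α, l ^ 2 * (Xᵀ α ⬝ᵥ Xᵀ α - 1) ^ 2 := by
          refine Finset.sum_le_sum fun α _ => ?_
          rw [← sq_abs, ← sq_abs (Xᵀ α ⬝ᵥ Xᵀ α - 1), ← mul_pow]
          exact pow_le_pow_left₀ (abs_nonneg _) (h.mean_vec _) 2
      _ = l ^ 2 * ∑ α, (Xᵀ α ⬝ᵥ Xᵀ α - 1) ^ 2 := by rw [Finset.mul_sum]
      _ ≤ _ := mul_le_mul_of_nonneg_left hX (sq_nonneg _)
  calc _ ≤ 1 * (l ^ 2 * B ^ 2) :=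
        mul_le_mul hv h1 (Finset.sum_nonneg fun _ _ => sq_nonneg _) (by norm_num)
    _ = _ := one_mul _

lemma comb_tail (h : SigOK σ σ' l) (X : Matrix (Fin d) (Fin n) ℝ) (B : ℝ) (hBpos : 0 < B)
    (hB : ∀ a : Fin n → ℝ, (X *ᵥ a) ⬝ᵥ (X *ᵥ a) ≤ B ^ 2 * ∑ α, a α ^ 2)
    (hX : ∑ α, (Xᵀ α ⬝ᵥ Xᵀ α - 1) ^ 2 ≤ B ^ 2)
    (v : Fin n → ℝ) (hv : ∑ α, v α ^ 2 ≤ 1) (dc : ℕ) :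
    gaussianMat dc d {W | (dc + 3 * n : ℝ) ≤
        ∑ i, (∑ α, v α * σ (W i ⬝ᵥ Xᵀ α)) ^ 2 / (20 * l ^ 2 * B ^ 2)}
      ≤ ENNReal.ofReal (Real.exp (-3 * n)) := by
  have hl := h.one_le
  have hmy := h.meas_comb X v
  have hmean := h.comb_mean X B hX v hv
  have hmgf := h.comb_mgf X B hB v hv
  set m := ∫ z, (∑ α, v α * σ (z ⬝ᵥ Xᵀ α)) ∂(gaussianVec d) with hm
  have hk : 0 < 5/2 * l ^ 2 * B ^ 2 := by positivity
  have h1 := subg_sq (Y := fun w => (∑ α, v α * σ (w ⬝ᵥ Xᵀ α)) - m) (hmy.sub_const m) hk hmgf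
  have h2 : ∫⁻ w, ENNReal.ofReal (Real.exp
      ((∑ α, v α * σ (w ⬝ᵥ Xᵀ α)) ^ 2 / (20 * l ^ 2 * B ^ 2))) ∂(gaussianVec d)
      ≤ ENNReal.ofReal (Real.exp 1) := by
    calc _ ≤ ∫⁻ w, ENNReal.ofReal (Real.exp (1/10)) * ENNReal.ofReal (Real.exp
          (((∑ α, v α * σ (w ⬝ᵥ Xᵀ α)) - m) ^ 2 / (4 * (5/2 * l ^ 2 * B ^ 2)))) ∂(gaussianVec d) := by
          refine lintegral_mono fun w => ?_
          rw [← ENNReal.ofReal_mul (Real.exp_pos _).le, ← Real.exp_add]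
          refine ENNReal.ofReal_le_ofReal (Real.exp_le_exp.2 ?_)
          set y := ∑ α, v α * σ (w ⬝ᵥ Xᵀ α)
          have hp : 0 < l ^ 2 * B ^ 2 := by positivity
          have e1 : y ^ 2 / (20 * l ^ 2 * B ^ 2) = (y ^ 2 / 2) / (10 * (l ^ 2 * B ^ 2)) := by
            field_simp; ring
          have e2 : 1/10 + (y - m) ^ 2 / (4 * (5/2 * l ^ 2 * B ^ 2))
              = (l ^ 2 * B ^ 2 + (y - m) ^ 2) / (10 * (l ^ 2 * B ^ 2)) := by
            field_simp; ring
          rw [e1, e2]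
          gcongr
          nlinarith [sq_nonneg (y - 2 * m)]
      _ ≤ ENNReal.ofReal (Real.exp (1/10)) * ENNReal.ofReal 2 := by
          rw [lintegral_const_mul]
          · gcongr
          · exact ENNReal.measurable_ofReal.comp (Real.measurable_exp.comp
              (((hmy.sub_const m).pow_const 2).div_const _))
      _ ≤ _ := by
          rw [← ENNReal.ofReal_mul (Real.exp_pos _).le]
          refine ENNReal.ofReal_le_ofReal ?_
          have e3 : Real.exp 1 = Real.exp (1/10) * Real.exp (9/10) := by
            rw [← Real.exp_add]; norm_num
          rw [e3]
          refine mul_le_mul_of_nonneg_left ?_ (Real.exp_pos _).le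
          have := Real.quadratic_le_exp_of_nonneg (x := 9/10) (by norm_num)
          norm_num at this ⊢; linarith
  refine (chernoff_rows (fun w => (∑ α, v α * σ (w ⬝ᵥ Xᵀ α)) ^ 2 / (20 * l ^ 2 * B ^ 2))
    ((hmy.pow_const 2).div_const _) 1 (dc + 3 * n) h2).trans ?_
  refine ENNReal.ofReal_le_ofReal (Real.exp_le_exp.2 (by linarith))

end SigOK

lemma exp_subconv {n : ℕ} (p a : Fin n → ℝ) (hp : ∀ i, 0 ≤ p i) (hS : ∑ i, p i ≤ 1) :
    Real.exp (∑ i, p i * a i) ≤ ∑ i, p i * Real.exp (a i) + (1 - ∑ i, p i) := by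
  set x := ∑ i, p i * a i with hx
  set S := ∑ i, p i with hSd
  have h1 : ∑ i, p i * (Real.exp x * (1 + a i - x)) ≤ ∑ i, p i * Real.exp (a i) := by
    refine Finset.sum_le_sum fun i _ => mul_le_mul_of_nonneg_left ?_ (hp i)
    have e : Real.exp (a i) = Real.exp x * Real.exp (a i - x) := by
      rw [← Real.exp_add]; congr 1; ring
    rw [e]
    refine mul_le_mul_of_nonneg_left ?_ (Real.exp_pos _).le
    linarith [Real.add_one_le_exp (a i - x)]
  have h2 : ∑ i, p i * (Real.exp x * (1 + a i - x)) = Real.exp x * (S + x - S * x) := by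
    have : ∀ i, p i * (Real.exp x * (1 + a i - x))
        = Real.exp x * (1 - x) * p i + Real.exp x * (p i * a i) := fun i => by ring
    simp_rw [this]
    rw [Finset.sum_add_distrib, ← Finset.mul_sum, ← Finset.mul_sum, ← hx, ← hSd]
    ring
  rw [h2] at h1
  have h3 : Real.exp x * (1 - x) ≤ 1 := by
    have := Real.add_one_le_exp (-x)
    have h4 : Real.exp x * Real.exp (-x) = 1 := by rw [← Real.exp_add]; simp
    nlinarith [Real.exp_pos x]
  have h4 := mul_le_mul_of_nonneg_left h3 (by linarith : 0 ≤ 1 - S)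
  nlinarith

namespace SigOK
variable {σ σ' : ℝ → ℝ} {l : ℝ} {d n : ℕ}

lemma exp_mix (h : SigOK σ σ' l) (X : Matrix (Fin d) (Fin n) ℝ)
    (hX2 : ∀ α, Xᵀ α ⬝ᵥ Xᵀ α ≤ 2) (v : Fin n → ℝ) (hv : ∑ α, v α ^ 2 ≤ 1) :
    ∫⁻ w, ENNReal.ofReal (Real.exp (∑ α, v α ^ 2 * (σ (w ⬝ᵥ Xᵀ α) ^ 2 / (16 * l ^ 2))))
      ∂(gaussianVec d) ≤ ENNReal.ofReal (Real.exp 1) := by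
  have hm : ∀ x : Fin d → ℝ, Measurable (fun w : Fin d → ℝ =>
      ENNReal.ofReal (Real.exp (σ (w ⬝ᵥ x) ^ 2 / (16 * l ^ 2)))) := fun x =>
    ENNReal.measurable_ofReal.comp (Real.measurable_exp.comp
      (((h.meas_vec x).pow_const 2).div_const _))
  calc _ ≤ ∫⁻ w, ((∑ α, ENNReal.ofReal (v α ^ 2) *
          ENNReal.ofReal (Real.exp (σ (w ⬝ᵥ Xᵀ α) ^ 2 / (16 * l ^ 2))))
          + ENNReal.ofReal (1 - ∑ α, v α ^ 2)) ∂(gaussianVec d) := by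
        refine lintegral_mono fun w => ?_
        refine (ENNReal.ofReal_le_ofReal (exp_subconv (fun α => v α ^ 2)
          (fun α => σ (w ⬝ᵥ Xᵀ α) ^ 2 / (16 * l ^ 2)) (fun α => sq_nonneg _) hv)).trans ?_
        rw [ENNReal.ofReal_add (Finset.sum_nonneg fun α _ => by positivity) (by linarith),
          ENNReal.ofReal_sum_of_nonneg (fun α _ => by positivity)]
        simp_rw [ENNReal.ofReal_mul (sq_nonneg _)]
        exact le_rfl
    _ = (∑ α, ENNReal.ofReal (v α ^ 2) * ∫⁻ w,
          ENNReal.ofReal (Real.exp (σ (w ⬝ᵥ Xᵀ α) ^ 2 / (16 * l ^ 2))) ∂(gaussianVec d))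
          + ENNReal.ofReal (1 - ∑ α, v α ^ 2) := by
        rw [lintegral_add_right _ measurable_const]
        congr 1
        · refine (lintegral_finsetSum _ fun α _ => (hm (Xᵀ α)).const_mul _).trans ?_
          exact Finset.sum_congr rfl fun α _ => lintegral_const_mul _ (hm (Xᵀ α))
        · simp
    _ ≤ (∑ α, ENNReal.ofReal (v α ^ 2) * ENNReal.ofReal (Real.exp 1))
          + ENNReal.ofReal (1 - ∑ α, v α ^ 2) := by
        gcongr with α _
        exact h.exp_vec _ (hX2 α)
    _ ≤ _ := by
        simp_rw [← ENNReal.ofReal_mul (sq_nonneg _)]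
        rw [← ENNReal.ofReal_sum_of_nonneg (fun α _ => by positivity),
          ← ENNReal.ofReal_add (Finset.sum_nonneg fun α _ => by positivity) (by linarith),
          ← Finset.sum_mul]
        refine ENNReal.ofReal_le_ofReal ?_
        have : 1 ≤ Real.exp 1 := Real.one_le_exp (by norm_num)
        nlinarith

lemma sq_tail (h : SigOK σ σ' l) (X : Matrix (Fin d) (Fin n) ℝ) (B : ℝ) (hBpos : 0 < B)
    (hB : ∀ a : Fin n → ℝ, (X *ᵥ a) ⬝ᵥ (X *ᵥ a) ≤ B ^ 2 * ∑ α, a α ^ 2)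
    (hX2 : ∀ α, Xᵀ α ⬝ᵥ Xᵀ α ≤ 2)
    (v : Fin n → ℝ) (hv : ∑ α, v α ^ 2 ≤ 1) (dc : ℕ) :
    gaussianMat dc d {W | (dc + 3 * n : ℝ) ≤
        ∑ i, (10 * B * l ^ 2)⁻¹ * ∑ α, v α * (σ (W i ⬝ᵥ Xᵀ α) ^ 2
          - ∫ z, σ (z ⬝ᵥ Xᵀ α) ^ 2 ∂(gaussianVec d))}
      ≤ ENNReal.ofReal (Real.exp (-3 * n)) := by
  have hl := h.one_le
  set τ := (10 * B * l ^ 2)⁻¹ with hτ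
  have hint : ∀ (α : Fin n) (s : ℝ), Integrable (fun w => s * σ (w ⬝ᵥ Xᵀ α) ^ 2) (gaussianVec d) :=
    fun α s => (h.int_sq_vec _).const_mul _
  have h1 := mgf_bound X B hB (fun x => σ x ^ 2) (fun x => 2 * σ x * σ' x)
    (fun x => by simpa using (h.der x).fun_pow 2)
    ((continuous_const.mul h.continuous).mul h.cont) (fun α => τ * v α)
    (integrable_finsetSum _ fun α _ => hint α _)
  have hmean : ∫ z, (∑ α, (τ * v α) * σ (z ⬝ᵥ Xᵀ α) ^ 2) ∂(gaussianVec d)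
      = ∑ α, (τ * v α) * ∫ z, σ (z ⬝ᵥ Xᵀ α) ^ 2 ∂(gaussianVec d) := by
    have := integral_finsetSum (μ := gaussianVec d) Finset.univ
      (f := fun (α : Fin n) w => (τ * v α) * σ (w ⬝ᵥ Xᵀ α) ^ 2) fun α _ => hint α _
    refine this.trans (Finset.sum_congr rfl fun α _ => integral_const_mul _ _)
  rw [hmean] at h1
  have h2 : ∫⁻ w, ENNReal.ofReal (Real.exp (τ * ∑ α, v α * (σ (w ⬝ᵥ Xᵀ α) ^ 2
          - ∫ z, σ (z ⬝ᵥ Xᵀ α) ^ 2 ∂(gaussianVec d)))) ∂(gaussianVec d)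
      ≤ ENNReal.ofReal (Real.exp 1) := by
    refine le_trans (le_of_eq (lintegral_congr fun w => ?_))
      (h1.trans ((lintegral_mono fun w => ENNReal.ofReal_le_ofReal (Real.exp_le_exp.2 ?_)).trans
        (h.exp_mix X hX2 v hv)))
    · rw [← Finset.sum_sub_distrib, Finset.mul_sum]
      congr 2
      exact Finset.sum_congr rfl fun α _ => by ring
    · rw [Finset.mul_sum]
      refine Finset.sum_le_sum fun α _ => ?_
      set s := σ (w ⬝ᵥ Xᵀ α)
      have hb : σ' (w ⬝ᵥ Xᵀ α) ^ 2 ≤ l ^ 2 := by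
        rw [← sq_abs]; exact pow_le_pow_left₀ (abs_nonneg _) (h.bd _) 2
      calc Real.pi ^ 2 / 8 * B ^ 2 * ((τ * v α) ^ 2 * (2 * s * σ' (w ⬝ᵥ Xᵀ α)) ^ 2)
          = (Real.pi ^ 2 / 8 * B ^ 2 * (τ * v α) ^ 2 * 4 * s ^ 2) * σ' (w ⬝ᵥ Xᵀ α) ^ 2 := by ring
        _ ≤ (10 / 8 * B ^ 2 * (τ * v α) ^ 2 * 4 * s ^ 2) * l ^ 2 := by
            gcongr
            exact pi_sq_le
        _ = v α ^ 2 * (s ^ 2 / (20 * l ^ 2)) := by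
            rw [hτ]; field_simp; ring
        _ ≤ v α ^ 2 * (s ^ 2 / (16 * l ^ 2)) := by
            gcongr; norm_num
  have hmφ : Measurable (fun w : Fin d → ℝ => τ * ∑ α, v α * (σ (w ⬝ᵥ Xᵀ α) ^ 2
          - ∫ z, σ (z ⬝ᵥ Xᵀ α) ^ 2 ∂(gaussianVec d))) :=
    (Finset.measurable_fun_sum _ fun α _ =>
      (((h.meas_vec _).pow_const 2).sub_const _).const_mul _).const_mul _
  refine (chernoff_rows _ hmφ 1 (dc + 3 * n) h2).trans ?_
  refine ENNReal.ofReal_le_ofReal (Real.exp_le_exp.2 (by linarith))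

end SigOK

section Det
variable {n dc : ℕ} (a : Fin dc → Fin n → ℝ)

lemma scaled_prod (α β : Fin n) :
    ∑ i, ((Real.sqrt dc)⁻¹ * a i α) * ((Real.sqrt dc)⁻¹ * a i β)
      = (dc : ℝ)⁻¹ * ∑ i, a i α * a i β := by
  rw [Finset.mul_sum]
  refine Finset.sum_congr rfl fun i _ => ?_
  have : (dc : ℝ)⁻¹ = (Real.sqrt dc)⁻¹ * (Real.sqrt dc)⁻¹ := by
    rw [← mul_inv, Real.mul_self_sqrt (Nat.cast_nonneg _)]
  rw [this]; ring

lemma scaled_sq (v : Fin n → ℝ) :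
    ∑ i, (∑ α, v α * ((Real.sqrt dc)⁻¹ * a i α)) ^ 2
      = (dc : ℝ)⁻¹ * ∑ i, (∑ α, v α * a i α) ^ 2 := by
  rw [Finset.mul_sum]
  refine Finset.sum_congr rfl fun i _ => ?_
  have h1 : (dc : ℝ)⁻¹ = (Real.sqrt dc)⁻¹ ^ 2 := by
    rw [inv_pow, Real.sq_sqrt (Nat.cast_nonneg _)]
  rw [h1, ← mul_pow, Finset.mul_sum]
  congr 1
  exact Finset.sum_congr rfl fun α _ => by ring

lemma dev_avg (hdc : 0 < dc) (α β : Fin n) {l ε E : ℝ} (hl : 1 ≤ l)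
    (h : |∑ i, (a i α * a i β / (16 * l ^ 2) - E / (16 * l ^ 2))| ≤ dc * (13 * ε)) :
    |(dc : ℝ)⁻¹ * (∑ i, a i α * a i β) - E| ≤ 208 * l ^ 2 * ε := by
  have hd : (0:ℝ) < dc := by exact_mod_cast hdc
  have e : ∑ i, (a i α * a i β / (16 * l ^ 2) - E / (16 * l ^ 2))
      = ((dc : ℝ) / (16 * l ^ 2)) * ((dc : ℝ)⁻¹ * (∑ i, a i α * a i β) - E) := by
    rw [Finset.sum_sub_distrib, ← Finset.sum_div]
    simp only [Finset.sum_const, Finset.card_univ, Fintype.card_fin, nsmul_eq_mul]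
    field_simp
  rw [e, abs_mul, abs_of_pos (by positivity), div_mul_eq_mul_div, div_le_iff₀ (by positivity)] at h
  refine le_of_mul_le_mul_left (h.trans (le_of_eq ?_)) hd
  ring

lemma det_op {N : Finset (EuclideanSpace ℝ (Fin n))} (hdc : 0 < dc)
    (hN : ∀ u : EuclideanSpace ℝ (Fin n), ‖u‖ ≤ 1 → ∃ v ∈ N, ‖u - v‖ ≤ 1 / 2)
    {l B : ℝ} (hl : 1 ≤ l) (hB : 0 < B)
    (h : ∀ v ∈ N, ∑ i, (∑ α, v α * a i α) ^ 2 / (20 * l ^ 2 * B ^ 2) ≤ (dc + 3 * n : ℝ)) :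
    opNorm (Matrix.of fun i α => (Real.sqrt dc)⁻¹ * a i α)
      ≤ 2 * (8 * (1 + (n : ℝ) / dc) * l ^ 2 * B) := by
  have hd : (0:ℝ) < dc := by exact_mod_cast hdc
  refine opNorm_net hN _ (by positivity) fun v hv => ?_
  have h1 := h v hv
  simp only [Matrix.of_apply]
  rw [scaled_sq]
  rw [← Finset.sum_div, div_le_iff₀ (by positivity)] at h1
  have hr : 0 ≤ (n : ℝ) / dc := by positivity
  set r := (n : ℝ) / dc with hrd
  have hn : (n : ℝ) = r * dc := by rw [hrd]; field_simp
  calc _ ≤ (dc : ℝ)⁻¹ * ((dc + 3 * n) * (20 * l ^ 2 * B ^ 2)) := by gcongr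
    _ = (1 + 3 * r) * 20 * (l ^ 2 * B ^ 2) := by rw [hn]; field_simp
    _ ≤ (64 * (1 + r) ^ 2 * l ^ 2) * (l ^ 2 * B ^ 2) := by
        refine mul_le_mul_of_nonneg_right ?_ (by positivity)
        have h3 : 1 ≤ l ^ 2 := by nlinarith
        have : 64 * (1 + r) ^ 2 * 1 ≤ 64 * (1 + r) ^ 2 * l ^ 2 := by gcongr
        nlinarith
    _ = _ := by ring

lemma det_sum {N : Finset (EuclideanSpace ℝ (Fin n))} (hdc : 0 < dc)
    (hN : ∀ u : EuclideanSpace ℝ (Fin n), ‖u‖ ≤ 1 → ∃ v ∈ N, ‖u - v‖ ≤ 1 / 2)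
    {l B : ℝ} (hl : 1 ≤ l) (hB : 0 < B) (E : Fin n → ℝ)
    (hE : ∑ α, (E α - 1) ^ 2 ≤ (5 * l ^ 2 * B) ^ 2)
    (h : ∀ v ∈ N, ∑ i, (10 * B * l ^ 2)⁻¹ * ∑ α, v α * (a i α ^ 2 - E α) ≤ dc + 3 * n) :
    ∑ α, ((dc : ℝ)⁻¹ * (∑ i, a i α * a i α) - 1) ^ 2
      ≤ (1000 * (1 + (n : ℝ) / dc) * l ^ 2 * B) ^ 2 := by
  have hd : (0:ℝ) < dc := by exact_mod_cast hdc
  have hr : 0 ≤ (n : ℝ) / dc := by positivity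
  set r := (n : ℝ) / dc with hrd
  have hn : (n : ℝ) = r * dc := by rw [hrd]; field_simp
  have h1 : ∑ α, ((dc : ℝ)⁻¹ * (∑ i, a i α * a i α) - E α) ^ 2
      ≤ (2 * (30 * (1 + r) * l ^ 2 * B)) ^ 2 := by
    refine sum_net hN _ (by positivity) fun v hv => ?_
    have h2 := h v hv
    rw [← Finset.mul_sum, inv_mul_le_iff₀ (by positivity), Finset.sum_comm] at h2
    have e : ∑ α, v α * ((dc : ℝ)⁻¹ * (∑ i, a i α * a i α) - E α)
        = (dc : ℝ)⁻¹ * ∑ α, ∑ i, v α * (a i α ^ 2 - E α) := by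
      rw [Finset.mul_sum]
      refine Finset.sum_congr rfl fun α _ => ?_
      rw [← Finset.mul_sum, Finset.sum_sub_distrib]
      simp only [Finset.sum_const, Finset.card_univ, Fintype.card_fin, nsmul_eq_mul, pow_two]
      field_simp
    rw [e]
    calc _ ≤ (dc : ℝ)⁻¹ * (10 * B * l ^ 2 * (dc + 3 * n)) := by gcongr
      _ = 10 * (1 + 3 * r) * (l ^ 2 * B) := by rw [hn]; field_simp
      _ ≤ 30 * (1 + r) * (l ^ 2 * B) :=
          mul_le_mul_of_nonneg_right (by linarith) (by positivity)
      _ = _ := by ring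
  have h3 : ∑ α, ((dc : ℝ)⁻¹ * (∑ i, a i α * a i α) - 1) ^ 2
      ≤ 2 * ∑ α, ((dc : ℝ)⁻¹ * (∑ i, a i α * a i α) - E α) ^ 2 + 2 * ∑ α, (E α - 1) ^ 2 := by
    rw [Finset.mul_sum, Finset.mul_sum, ← Finset.sum_add_distrib]
    refine Finset.sum_le_sum fun α _ => ?_
    set g := (dc : ℝ)⁻¹ * (∑ i, a i α * a i α)
    nlinarith [sq_nonneg ((g - E α) - (E α - 1))]
  have h4 : (l ^ 2 * B) ^ 2 ≤ ((1 + r) * (l ^ 2 * B)) ^ 2 := by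
    refine pow_le_pow_left₀ (by positivity) ?_ 2
    nlinarith [mul_nonneg hr (by positivity : 0 ≤ l ^ 2 * B)]
  have h5 : 0 ≤ (l ^ 2 * B) ^ 2 := sq_nonneg _
  nlinarith

end Det

lemma main_aux {d n dc : ℕ} (hn : 0 < n) (hdc : 0 < dc) (X : Matrix (Fin d) (Fin n) ℝ)
    {ε B l : ℝ} {σ σ' : ℝ → ℝ} (h : SigOK σ σ' l) (hX : IsOrthonormal ε B X) (hε : ε < 1 / l) :
    gaussianMat dc d
        {W | IsOrthonormal (1000 * l ^ 2 * ε) (1000 * (1 + (n : ℝ) / (dc : ℝ)) * l ^ 2 * B)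
          ((Real.sqrt dc)⁻¹ • ((Matrix.of W * X).map σ))}ᶜ ≤
      ENNReal.ofReal (2 * (n : ℝ) ^ 2 * Real.exp (-1 * dc * ε ^ 2) + 3 * Real.exp (-1 * n)) := by
  have hl := h.one_le
  obtain ⟨hX1, hX2, hX3, hX4⟩ := hX
  have hcol : ∀ α β, Xᵀ α ⬝ᵥ Xᵀ β = ∑ i, X i α * X i β := fun α β => rfl
  have hcols : ∀ α, Xᵀ α ⬝ᵥ Xᵀ α = ∑ i, X i α ^ 2 := fun α => by
    rw [hcol]; exact Finset.sum_congr rfl fun i _ => by ring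
  simp only [← hcols] at hX1 hX4
  simp only [← hcol] at hX2
  have hε1 : ε < 1 := hε.trans_le (by rw [div_le_one (by linarith)]; exact hl)
  have hε0 : 0 ≤ ε := (abs_nonneg _).trans (hX1 ⟨0, hn⟩)
  have hX2' : ∀ α, Xᵀ α ⬝ᵥ Xᵀ α ≤ 2 := fun α => by
    have := (abs_le.1 (hX1 α)).2; linarith
  have hBX := opNorm_bound hX3
  have hB : 0 < B := by
    have hB0 : 0 ≤ B := (norm_nonneg _).trans hX3
    rcases hB0.eq_or_lt with h0 | h0
    · exfalso
      have h1 := hBX (Pi.single ⟨0, hn⟩ 1)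
      rw [← h0, Matrix.mulVec_single_one] at h1
      have h2 := (abs_le.1 (hX1 ⟨0, hn⟩)).1
      have h3 : Xᵀ ⟨0, hn⟩ ⬝ᵥ Xᵀ ⟨0, hn⟩ ≤ 0 := by
        have h4 : X.col ⟨0, hn⟩ ⬝ᵥ X.col ⟨0, hn⟩ ≤ 0 := by simpa using h1
        exact h4
      linarith
    · exact h0
  obtain ⟨N, hNc, hN1, hN⟩ := exists_net n
  let E : Fin n → Fin n → ℝ := fun α β => ∫ w, σ (w ⬝ᵥ Xᵀ α) * σ (w ⬝ᵥ Xᵀ β) ∂(gaussianVec d)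
  let E2 : Fin n → ℝ := fun α => ∫ w, σ (w ⬝ᵥ Xᵀ α) ^ 2 ∂(gaussianVec d)
  have hE2 : ∀ α, E α α = E2 α := fun α => by
    simp only [E, E2, pow_two]
  let S1 : Fin n × Fin n → Set (Fin dc → Fin d → ℝ) := fun p =>
    {W | dc * (13 * ε) ≤ |∑ i, (σ (W i ⬝ᵥ Xᵀ p.1) * σ (W i ⬝ᵥ Xᵀ p.2) / (16 * l ^ 2)
      - ∫ z, σ (z ⬝ᵥ Xᵀ p.1) * σ (z ⬝ᵥ Xᵀ p.2) / (16 * l ^ 2) ∂(gaussianVec d))|}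
  let S2 : EuclideanSpace ℝ (Fin n) → Set (Fin dc → Fin d → ℝ) := fun v =>
    {W | (dc + 3 * n : ℝ) ≤
        ∑ i, (∑ α, v α * σ (W i ⬝ᵥ Xᵀ α)) ^ 2 / (20 * l ^ 2 * B ^ 2)}
  let S3 : EuclideanSpace ℝ (Fin n) → Set (Fin dc → Fin d → ℝ) := fun v =>
    {W | (dc + 3 * n : ℝ) ≤
        ∑ i, (10 * B * l ^ 2)⁻¹ * ∑ α, v α * (σ (W i ⬝ᵥ Xᵀ α) ^ 2
          - ∫ z, σ (z ⬝ᵥ Xᵀ α) ^ 2 ∂(gaussianVec d))}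
  have hS1 : ∀ p, gaussianMat dc d (S1 p) ≤ ENNReal.ofReal (2 * Real.exp (-1 * dc * ε ^ 2)) :=
    fun p => bern_tail (Z := fun w => σ (w ⬝ᵥ Xᵀ p.1) * σ (w ⬝ᵥ Xᵀ p.2) / (16 * l ^ 2))
      (((h.meas_vec _).mul (h.meas_vec _)).div_const _)
      (h.exp_prod _ _ (hX2' _) (hX2' _)) hε0 hε1.le
  have hU1 : gaussianMat dc d (⋃ p ∈ (Finset.univ : Finset (Fin n × Fin n)), S1 p)
      ≤ ENNReal.ofReal (2 * (n : ℝ) ^ 2 * Real.exp (-1 * dc * ε ^ 2)) := by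
    refine (measure_biUnion_finset_le _ S1).trans ((Finset.sum_le_sum fun p _ => hS1 p).trans ?_)
    rw [Finset.sum_const, Finset.card_univ, Fintype.card_prod, Fintype.card_fin, nsmul_eq_mul]
    have h1 : ((n * n : ℕ) : ENNReal) = ENNReal.ofReal ((n * n : ℕ) : ℝ) := by
      rw [ENNReal.ofReal_natCast]
    rw [h1, ← ENNReal.ofReal_mul (by positivity)]
    refine ENNReal.ofReal_le_ofReal (le_of_eq ?_)
    push_cast; ring
  have hU2 : gaussianMat dc d (⋃ v ∈ N, S2 v) ≤ ENNReal.ofReal (Real.exp (-1 * n)) :=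
    union_net N hNc S2 fun v hv => h.comb_tail X B hB hBX hX4 v (net_sq (hN1 v hv)) dc
  have hU3 : gaussianMat dc d (⋃ v ∈ N, S3 v) ≤ ENNReal.ofReal (Real.exp (-1 * n)) :=
    union_net N hNc S3 fun v hv => h.sq_tail X B hB hBX hX2' v (net_sq (hN1 v hv)) dc
  have hsub : {W | IsOrthonormal (1000 * l ^ 2 * ε) (1000 * (1 + (n : ℝ) / (dc : ℝ)) * l ^ 2 * B)
          ((Real.sqrt dc)⁻¹ • ((Matrix.of W * X).map σ))}ᶜ ⊆
      (⋃ p ∈ (Finset.univ : Finset (Fin n × Fin n)), S1 p) ∪ ((⋃ v ∈ N, S2 v) ∪ (⋃ v ∈ N, S3 v)) := by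
    intro W hW
    by_contra hcon
    apply hW
    simp only [Set.mem_union, Set.mem_iUnion, not_or, not_exists] at hcon
    obtain ⟨c1, c2, c3⟩ := hcon
    have c1' := fun p => c1 p (Finset.mem_univ _)
    have c2' := c2
    have c3' := c3
    simp only [S1, Set.mem_ofPred_eq, not_le] at c1'
    simp only [S2, Set.mem_ofPred_eq, not_le] at c2'
    simp only [S3, Set.mem_ofPred_eq, not_le] at c3'
    let a : Fin dc → Fin n → ℝ := fun i α => σ (W i ⬝ᵥ Xᵀ α)
    have hmat : (Real.sqrt dc)⁻¹ • ((Matrix.of W * X).map σ)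
        = Matrix.of fun i α => (Real.sqrt dc)⁻¹ * a i α := by
      ext i α
      simp only [Matrix.smul_apply, Matrix.map_apply, smul_eq_mul, Matrix.of_apply]
      rfl
    have hdev : ∀ α β, |(dc : ℝ)⁻¹ * (∑ i, a i α * a i β) - E α β| ≤ 208 * l ^ 2 * ε := by
      intro α β
      refine dev_avg a hdc α β hl ?_
      have h1 := (c1' (α, β)).le
      simp only [integral_div] at h1
      exact h1
    have hlε : 0 ≤ l ^ 2 * ε := by positivity
    rw [Set.mem_ofPred_eq, hmat]
    refine ⟨fun α => ?_, fun α β hαβ => ?_, ?_, ?_⟩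
    · simp only [Matrix.of_apply, pow_two ((Real.sqrt dc)⁻¹ * _)]
      rw [scaled_prod]
      have h1 := abs_le.1 (hdev α α)
      have h2 : |E2 α - 1| ≤ 5 * l ^ 2 * ε := (h.var_vec (Xᵀ α) (hX2' α)).trans
        (mul_le_mul_of_nonneg_left (hX1 α) (by positivity))
      rw [← hE2] at h2
      have h3 := abs_le.1 h2
      rw [abs_le]; constructor <;> linarith
    · simp only [Matrix.of_apply]
      rw [scaled_prod]
      have h1 := abs_le.1 (hdev α β)
      have h2 := abs_le.1 (h.mean_prod (Xᵀ α) (Xᵀ β) (hX1 α) (hX1 β) (hX2 α β hαβ) hε1)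
      change -(12 * l ^ 2 * ε) ≤ E α β ∧ E α β ≤ _ at h2
      rw [abs_le]; constructor <;> linarith
    · refine (det_op a hdc hN hl hB fun v hv => (c2' v hv).le).trans ?_
      have : 0 ≤ (1 + (n : ℝ) / dc) * l ^ 2 * B := by positivity
      linarith
    · simp only [Matrix.of_apply, pow_two ((Real.sqrt dc)⁻¹ * _)]
      simp only [scaled_prod]
      refine det_sum a hdc hN hl hB E2 ?_ fun v hv => (c3' v hv).le
      calc _ ≤ ∑ α, (5 * l ^ 2) ^ 2 * (Xᵀ α ⬝ᵥ Xᵀ α - 1) ^ 2 := by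
            refine Finset.sum_le_sum fun α _ => ?_
            rw [← sq_abs, ← sq_abs (Xᵀ α ⬝ᵥ Xᵀ α - 1), ← mul_pow]
            exact pow_le_pow_left₀ (abs_nonneg _) (h.var_vec _ (hX2' α)) 2
        _ = (5 * l ^ 2) ^ 2 * ∑ α, (Xᵀ α ⬝ᵥ Xᵀ α - 1) ^ 2 := by rw [Finset.mul_sum]
        _ ≤ (5 * l ^ 2) ^ 2 * B ^ 2 := mul_le_mul_of_nonneg_left hX4 (sq_nonneg _)
        _ = _ := by ring
  refine (measure_mono hsub).trans ((measure_union_le _ _).trans ((add_le_add hU1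
    ((measure_union_le _ _).trans (add_le_add hU2 hU3))).trans ?_))
  rw [← ENNReal.ofReal_add (by positivity) (by positivity),
    ← ENNReal.ofReal_add (by positivity) (by positivity)]
  refine ENNReal.ofReal_le_ofReal ?_
  linarith [Real.exp_pos (-1 * (n : ℝ))]

theorem orthonormal_propagation :
    ∃ C : ℝ, 0 < C ∧ ∃ c : ℝ, 0 < c ∧
      ∀ (d n dc : ℕ) (X : Matrix (Fin d) (Fin n) ℝ) (ε B lamσ : ℝ)
        (σ σ' σ'' : ℝ → ℝ),
        (∀ x, HasDerivAt σ (σ' x) x) →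
        (∀ x, HasDerivAt σ' (σ'' x) x) →
        (∀ x, |σ' x| ≤ lamσ) →
        (∀ x, |σ'' x| ≤ lamσ) →
        (∫ x, σ x ∂stdGaussian) = 0 →
        (∫ x, (σ x) ^ 2 ∂stdGaussian) = 1 →
        IsOrthonormal ε B X →
        ε < 1 / lamσ →
        gaussianMat dc d
            {W | IsOrthonormal (C * lamσ ^ 2 * ε) (C * (1 + (n : ℝ) / (dc : ℝ)) * lamσ ^ 2 * B)
              ((Real.sqrt dc)⁻¹ • ((Matrix.of W * X).map σ))} ≥
          ENNReal.ofReal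
            (1 - 2 * (n : ℝ) ^ 2 * Real.exp (-c * dc * ε ^ 2) - 3 * Real.exp (-c * n)) := by
  refine ⟨1000, by norm_num, 1, one_pos, ?_⟩
  intro d n dc X ε B l σ σ' σ'' h1 h2 h3 h4 h5 h6 hX hε
  have h : SigOK σ σ' l := ⟨h1, continuous_iff_continuousAt.2 fun x => (h2 x).continuousAt, h3, h5, h6⟩
  rcases Nat.eq_zero_or_pos n with rfl | hn
  · rw [ENNReal.ofReal_of_nonpos]
    · exact zero_le
    · simp
  rcases Nat.eq_zero_or_pos dc with rfl | hdc
  · rw [ENNReal.ofReal_of_nonpos]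
    · exact zero_le
    · have hn1 : (1:ℝ) ≤ n := by exact_mod_cast hn
      have := Real.exp_pos (-1 * (n : ℝ))
      simp only [Nat.cast_zero, mul_zero, zero_mul, Real.exp_zero, mul_one]
      nlinarith
  have key := main_aux hn hdc X h hX hε
  set S := {W : Fin dc → Fin d → ℝ | IsOrthonormal (1000 * l ^ 2 * ε)
    (1000 * (1 + (n : ℝ) / (dc : ℝ)) * l ^ 2 * B) ((Real.sqrt dc)⁻¹ • ((Matrix.of W * X).map σ))}
  have hu : (1 : ENNReal) ≤ gaussianMat dc d S + gaussianMat dc d Sᶜ := by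
    rw [← measure_univ (μ := gaussianMat dc d), ← Set.union_compl_self S]
    exact measure_union_le _ _
  have e : (1 - 2 * (n : ℝ) ^ 2 * Real.exp (-1 * dc * ε ^ 2) - 3 * Real.exp (-1 * n))
      = 1 - (2 * (n : ℝ) ^ 2 * Real.exp (-1 * dc * ε ^ 2) + 3 * Real.exp (-1 * n)) := by ring
  rw [ge_iff_le, e, ENNReal.ofReal_sub _ (by positivity), ENNReal.ofReal_one, tsub_le_iff_right]
  exact hu.trans (add_le_add le_rfl key)
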